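/- (Corollary 3.5) Let n ≥ 2 and α ≥ 0. The norm order of the family F_α satisfies ‖ord‖F_α ≤ (n+1)·α + √(1 + (1/4)(n+1)α² + C(n,α)), where C(n,α) = (4n² + 2n − 2 + (n+1)/(n−1))·α² + (4√(n+1) + 8√(n+1)/(n−1))·α. -/

import Mathlib

open scoped BigOperators

noncomputable section

/-- Partial derivative `∂f/∂z_i` of a scalar-valued holomorphic function on `ℂⁿ`. -/
def pd (n : ℕ) (i : Fin n) (f : (Fin n → ℂ) → ℂ) (z : Fin n → ℂ) : ℂ :=
  fderiv ℂ f z (Pi.single i 1)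

/-- Second partial derivative `∂²f/∂z_i∂z_j`. -/
def pd2 (n : ℕ) (i j : Fin n) (f : (Fin n → ℂ) → ℂ) (z : Fin n → ℂ) : ℂ :=
  pd n i (fun w => pd n j f w) z

/-- Complex Jacobian matrix `DF`. -/
def Jac (n : ℕ) (F : (Fin n → ℂ) → (Fin n → ℂ)) (z : Fin n → ℂ) :
    Matrix (Fin n) (Fin n) ℂ :=
  Matrix.of fun i j => pd n j (fun w => F w i) z

/-- Jacobian determinant `JF = det DF`. -/
def JDet (n : ℕ) (F : (Fin n → ℂ) → (Fin n → ℂ)) (z : Fin n → ℂ) : ℂ :=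
  (Jac n F z).det

/-- Oda's Schwarzian derivative `S^k_{ij}F`; the derivative of `log JF` is expressed
by the logarithmic derivative `(∂JF/∂z)/JF`, which is the derivative of any local
branch of the logarithm. -/
def oSchw (n : ℕ) (F : (Fin n → ℂ) → (Fin n → ℂ)) (i j k : Fin n) (z : Fin n → ℂ) : ℂ :=
  (∑ l, pd2 n i j (fun w => F w l) z * (Jac n F z)⁻¹ k l)
    - (1 / ((n : ℂ) + 1)) *
        ((if k = i then 1 else 0) * (pd n j (JDet n F) z / JDet n F z)
          + (if k = j then 1 else 0) * (pd n i (JDet n F) z / JDet n F z))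

/-- `S⁰_{ij}F`, defined through a local branch `u₀` of `(JF)^{-1/(n+1)}`. -/
def oS0 (n : ℕ) (F : (Fin n → ℂ) → (Fin n → ℂ)) (u₀ : (Fin n → ℂ) → ℂ)
    (i j : Fin n) (z : Fin n → ℂ) : ℂ :=
  (u₀ z)⁻¹ * (pd2 n i j u₀ z - ∑ k, oSchw n F i j k z * pd n k u₀ z)

/-- Euclidean norm on `ℂⁿ`. -/
def euclNorm (n : ℕ) (v : Fin n → ℂ) : ℝ := Real.sqrt (∑ i, ‖v i‖ ^ 2)

/-- Euclidean open unit ball `Bⁿ ⊆ ℂⁿ`. -/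
def eball (n : ℕ) : Set (Fin n → ℂ) := {z | euclNorm n z < 1}

/-- A biholomorphic automorphism of the unit ball: a holomorphic bijection of `Bⁿ`
onto itself with holomorphic inverse. -/
def IsAutB (n : ℕ) (σ : (Fin n → ℂ) → (Fin n → ℂ)) : Prop :=
  DifferentiableOn ℂ σ (eball n) ∧ Set.BijOn σ (eball n) (eball n) ∧
    ∃ τ : (Fin n → ℂ) → (Fin n → ℂ), DifferentiableOn ℂ τ (eball n) ∧
      (∀ z ∈ eball n, τ (σ z) = z) ∧ (∀ w ∈ eball n, σ (τ w) = w)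

/-- The automorphism of `Bⁿ` with `σ(0) = (ζ₁,0,…,0)` used in Lemma 3.2. -/
def sigmaA (n : ℕ) [NeZero n] (ζ : ℂ) (z : Fin n → ℂ) : Fin n → ℂ := fun i =>
  if i = 0 then (z 0 + ζ) / (1 + (starRingEnd ℂ) ζ * z 0)
  else ((Real.sqrt (1 - ‖ζ‖ ^ 2) : ℂ) * z i) / (1 + (starRingEnd ℂ) ζ * z 0)

/-- The Koebe transform `G(z) = Dσ(0)⁻¹ DF₀(σ(0))⁻¹ (F₀(σ(z)) − F₀(σ(0)))`. -/
def Koebe (n : ℕ) (F₀ σ : (Fin n → ℂ) → (Fin n → ℂ)) (z : Fin n → ℂ) : Fin n → ℂ :=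
  Matrix.mulVec ((Jac n σ 0)⁻¹ * (Jac n F₀ (σ 0))⁻¹) (F₀ (σ z) - F₀ (σ 0))

/-- The conjugation `G(z) = U⁻¹·F₀(U·z)` of `F₀` by a unitary matrix `U`. -/
def unitKoebe (n : ℕ) (F₀ : (Fin n → ℂ) → (Fin n → ℂ)) (U : Matrix (Fin n) (Fin n) ℂ)
    (z : Fin n → ℂ) : Fin n → ℂ :=
  Matrix.mulVec U⁻¹ (F₀ (Matrix.mulVec U z))

/-- The Schwarzian derivative operator `SF(z)(v) = (vᵗ𝕊¹F(z)v, …, vᵗ𝕊ⁿF(z)v)`. -/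
def SchwOp (n : ℕ) (F : (Fin n → ℂ) → (Fin n → ℂ)) (z v : Fin n → ℂ) : Fin n → ℂ :=
  fun k => ∑ i, ∑ j, v i * oSchw n F i j k z * v j

/-- The squared Bergman norm `‖v‖_z² = Σ_{i,j} g_{ij}(z) v_i conj(v_j)` on `Bⁿ`. -/
def bergSq (n : ℕ) (z v : Fin n → ℂ) : ℝ :=
  (∑ i, ∑ j, (((n : ℂ) + 1) / (((1 - (euclNorm n z) ^ 2 : ℝ) : ℂ)) ^ 2) *
      ((if i = j then ((1 - (euclNorm n z) ^ 2 : ℝ) : ℂ) else 0)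
        + (starRingEnd ℂ) (z i) * z j) * v i * (starRingEnd ℂ) (v j)).re

/-- Membership in the linearly invariant family `F_α`. -/
def memF (n : ℕ) (α : ℝ) (F : (Fin n → ℂ) → (Fin n → ℂ)) : Prop :=
  DifferentiableOn ℂ F (eball n) ∧ (∀ z ∈ eball n, JDet n F z ≠ 0) ∧
    F 0 = 0 ∧ Jac n F 0 = 1 ∧
    ∀ z ∈ eball n, ∀ v : Fin n → ℂ, bergSq n z v = 1 →
      Real.sqrt (bergSq n z (SchwOp n F z v)) ≤ α

/-!
Everything is expressed through the pre-Schwarzian `Γ = DF⁻¹ D²F`. Its trace part is the `1`-form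
`a = (n + 1)⁻¹ d log JF` and its trace-free part is the Schwarzian `S`, so that
`D²F(0)(v, v) = S(v, v) + 2 a(v) v` at the origin. The term `S` is controlled by `α`, and it remains
to bound `|a(0)|`.

As a connection form, `Γ` is flat. The trace of the flatness equation expresses `(n - 1) (Da)(e, e)`
through `a(e)`, `a(S(e, e))`, `tr (S(e)²)` and the divergence of `S`, and Cauchy's estimate bounds
the latter. Suppose now that `|a(0)|` is largest among all `F ∘ σ`, `σ` an automorphism of the ball.
For the extremal unit vector `e` the function `Re ((1 - t²) a(t e)(e) - t)` then has a maximum at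
`t = 0`, hence `Re (Da(0))(e, e) = 1`, and the trace identity becomes a quadratic inequality for
`|a(0)|`.

An extremal automorphism exists when `a` is continuous up to the sphere, since the norm of the form
transported from a boundary point is `1`. The dilations `z ↦ F (r z)` reduce to this case: they
satisfy the same Schwarzian bound.
-/

section Holomorphy

open Metric Set Filter Topology

variable {E G : Type*} [NormedAddCommGroup E] [NormedSpace ℂ E]
  [NormedAddCommGroup G] [NormedSpace ℂ G] {f : E → G} {U : Set E} {x y z : E} {C R : ℝ}

theorem norm_fderiv_le_of_forall_mem_closedBall_norm_le (hR : 0 < R)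
    (hf : ∀ y ∈ closedBall x R, DifferentiableAt ℂ f y) (hC : ∀ y ∈ closedBall x R, ‖f y‖ ≤ C) :
    ‖fderiv ℂ f x‖ ≤ C / R := by
  have hC₀ : 0 ≤ C := (norm_nonneg _).trans (hC x (mem_closedBall_self hR.le))
  refine ContinuousLinearMap.opNorm_le_bound _ (by positivity) fun w => ?_
  rcases eq_or_ne w 0 with rfl | hw
  · simp
  have hw' : 0 < ‖w‖ := norm_pos_iff.2 hw
  have hmem : ∀ ζ ∈ closedBall (0 : ℂ) (R / ‖w‖), x + ζ • w ∈ closedBall x R := fun ζ hζ => by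
    rw [mem_closedBall, dist_zero_right, le_div_iff₀ hw'] at hζ
    rwa [mem_closedBall, dist_self_add_left, norm_smul]
  have hline : ∀ ζ : ℂ, HasDerivAt (fun ζ : ℂ => x + ζ • w) w ζ := fun ζ => by
    simpa using ((hasDerivAt_id ζ).smul_const w).const_add x
  have hslice : ∀ ζ ∈ closedBall (0 : ℂ) (R / ‖w‖),
      HasDerivAt (fun ζ : ℂ => f (x + ζ • w)) (fderiv ℂ f (x + ζ • w) w) ζ := fun ζ hζ =>
    (hf _ (hmem ζ hζ)).hasFDerivAt.comp_hasDerivAt ζ (hline ζ)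
  have hρ : 0 < R / ‖w‖ := by positivity
  have hcauchy := Complex.norm_deriv_le_of_forall_mem_sphere_norm_le hρ
    (DifferentiableOn.diffContOnCl_ball (U := closedBall 0 (R / ‖w‖))
      (fun ζ hζ => (hslice ζ hζ).differentiableAt.differentiableWithinAt) subset_rfl)
    fun ζ hζ => hC _ (hmem ζ (sphere_subset_closedBall hζ))
  rw [(hslice 0 (mem_closedBall_self hρ.le)).deriv, zero_smul, add_zero] at hcauchy
  exact hcauchy.trans_eq (by field_simp)

theorem uniformCauchySeqOn_fderiv {ι : Type*} {l : Filter ι} {F : ι → E → G} (hR : 0 < R)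
    (hF : ∀ᶠ i in l, DifferentiableOn ℂ (F i) (ball x (2 * R)))
    (hcauchy : UniformCauchySeqOn F l (ball x (2 * R))) :
    UniformCauchySeqOn (fun i => fderiv ℂ (F i)) l (ball x R) := by
  rw [SeminormedAddGroup.uniformCauchySeqOn_iff_tendstoUniformlyOn_zero,
    Metric.tendstoUniformlyOn_iff] at hcauchy ⊢
  intro ε hε
  filter_upwards [hcauchy (ε * (R / 4)) (by positivity), hF.prod_mk hF] with i hi ⟨hF₁, hF₂⟩ y hy
  have hsub : closedBall y (R / 2) ⊆ ball x (2 * R) :=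
    closedBall_subset_ball' (by rw [mem_ball] at hy; linarith)
  have hd : ∀ j, DifferentiableOn ℂ (F j) (ball x (2 * R)) → ∀ w ∈ closedBall y (R / 2),
      DifferentiableAt ℂ (F j) w := fun j hj w hw =>
    hj.differentiableAt (isOpen_ball.mem_nhds (hsub hw))
  have hy' : y ∈ closedBall y (R / 2) := mem_closedBall_self (by positivity)
  have hest := norm_fderiv_le_of_forall_mem_closedBall_norm_le (f := F i.2 - F i.1)
    (half_pos hR) (fun w hw => (hd _ hF₂ w hw).sub (hd _ hF₁ w hw)) fun w hw => by
      simpa only [Pi.zero_apply, Pi.sub_apply, dist_zero_left, neg_add_eq_sub] using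
        (hi w (hsub hw)).le
  rw [fderiv_sub (hd _ hF₂ y hy') (hd _ hF₁ y hy')] at hest
  simp only [Pi.zero_apply, dist_zero_left, neg_add_eq_sub]
  refine hest.trans_lt ?_
  field_simp
  norm_num

theorem differentiableAt_of_tendstoUniformlyOn_ball [CompleteSpace G] {ι : Type*} {l : Filter ι}
    [l.NeBot] {F : ι → E → G} (hR : 0 < R)
    (hF : ∀ᶠ i in l, DifferentiableOn ℂ (F i) (ball x R))
    (hFf : TendstoUniformlyOn F f l (ball x R)) : DifferentiableAt ℂ f x := by
  rw [← mul_div_cancel₀ R (two_ne_zero' ℝ)] at hF hFf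
  have hcauchy := uniformCauchySeqOn_fderiv (half_pos hR) hF hFf.uniformCauchySeqOn
  choose! f' hf' using fun y (hy : y ∈ ball x (R / 2)) =>
    CompleteSpace.complete (hcauchy.cauchy_map hy)
  have hx : ball x (R / 2) ∈ 𝓝 x := ball_mem_nhds x (half_pos hR)
  have hunif := hcauchy.tendstoUniformlyOn_of_tendsto hf'
  refine (hasFDerivAt_of_tendstoUniformlyOnFilter (g' := f') (f := F)
    (hunif.tendstoUniformlyOnFilter.mono_right (le_principal_iff.2 hx)) ?_ ?_).differentiableAt
  · filter_upwards [hF.prod_mk hx] with i ⟨hi, hy⟩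
    have hmem : ball x (2 * (R / 2)) ∈ 𝓝 i.2 :=
      isOpen_ball.mem_nhds (ball_subset_ball (by linarith) hy)
    exact (hi.differentiableAt hmem).hasFDerivAt
  · filter_upwards [hx] with y hy using hFf.tendsto_at (ball_subset_ball (by linarith) hy)

theorem norm_fderiv_sub_fderiv_le (hR : 0 < R)
    (hf : ∀ y ∈ ball x (3 * R), DifferentiableAt ℂ f y) (hC : ∀ y ∈ ball x (3 * R), ‖f y‖ ≤ C)
    (hy : y ∈ ball x R) (hz : z ∈ ball x R) :
    ‖fderiv ℂ f z - fderiv ℂ f y‖ ≤ C / R / R * ‖z - y‖ := by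
  have hsub : ∀ {w r}, w ∈ ball x r → closedBall w R ⊆ ball x (r + R) := fun hw =>
    closedBall_subset_ball' (by rw [mem_ball] at hw; linarith)
  have hshift : ∀ w ∈ closedBall y R, w + (z - y) ∈ closedBall z R := fun w hw => by
    rw [mem_closedBall, dist_eq_norm] at hw ⊢
    rwa [show w + (z - y) - z = w - y by abel]
  have hbound : ∀ w ∈ ball x (R + R), ‖fderiv ℂ f w‖ ≤ C / R := fun w hw =>
    have hw' : closedBall w R ⊆ ball x (3 * R) := by convert! hsub hw using 2; ring
    norm_fderiv_le_of_forall_mem_closedBall_norm_le hR (fun v hv => hf v (hw' hv))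
      fun v hv => hC v (hw' hv)
  have hdiff : ∀ w ∈ ball x (R + R), DifferentiableAt ℂ f w := fun w hw =>
    hf w (ball_subset_ball (by linarith) hw)
  have hmean : ∀ w ∈ closedBall y R, ‖f (w + (z - y)) - f w‖ ≤ C / R * ‖z - y‖ := fun w hw => by
    simpa only [add_sub_cancel_left] using Convex.norm_image_sub_le_of_norm_fderiv_le hdiff hbound
      (convex_ball x (R + R)) (hsub hy hw) (hsub hz (hshift w hw))
  have hincr := norm_fderiv_le_of_forall_mem_closedBall_norm_le
    (f := fun w => f (w + (z - y)) - f w) hR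
    (fun w hw => ((differentiableAt_comp_add_right _).2 (hdiff _ (hsub hz (hshift w hw)))).sub
      (hdiff w (hsub hy hw))) hmean
  have hy' := mem_closedBall_self (x := y) hR.le
  rw [fderiv_fun_sub ((differentiableAt_comp_add_right _).2 (hdiff _ (hsub hz (hshift y hy'))))
    (hdiff y (hsub hy hy')), fderiv_comp_add_right, add_sub_cancel] at hincr
  exact hincr.trans_eq (by ring)

theorem norm_slope_sub_fderiv_le (hR : 0 < R)
    (hf : ∀ y ∈ ball x (3 * R), DifferentiableAt ℂ f y) (hC : ∀ y ∈ ball x (3 * R), ‖f y‖ ≤ C)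
    (hy : y ∈ ball x R) {v : E} {t : ℂ} (ht : t ≠ 0) (hyt : y + t • v ∈ ball x R) :
    ‖t⁻¹ • (f (y + t • v) - f y) - fderiv ℂ f y v‖ ≤ C / R / R * ‖v‖ ^ 2 * ‖t‖ := by
  have hseg : segment ℝ y (y + t • v) ⊆ ball x R := (convex_ball x R).segment_subset hy hyt
  have hR' : ball x R ⊆ ball x (3 * R) := ball_subset_ball (by linarith)
  have hC₀ : 0 ≤ C := (norm_nonneg _).trans (hC y (hR' hy))
  have htaylor := (convex_segment y (y + t • v)).norm_image_sub_le_of_norm_hasFDerivWithin_le'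
    (fun w hw => (hf w (hR' (hseg hw))).hasFDerivAt.hasFDerivWithinAt)
    (fun w hw => (norm_fderiv_sub_fderiv_le hR hf hC hy (hseg hw)).trans
      (mul_le_mul_of_nonneg_left (norm_sub_le_of_mem_segment hw) (by positivity)))
    (left_mem_segment ℝ _ _) (right_mem_segment ℝ _ _)
  have hfactor : t⁻¹ • (f (y + t • v) - f y) - fderiv ℂ f y v =
      t⁻¹ • (f (y + t • v) - f y - fderiv ℂ f y (y + t • v - y)) := by
    rw [add_sub_cancel_left, map_smul, smul_sub _ (f _ - f y), inv_smul_smul₀ ht]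
  rw [add_sub_cancel_left] at htaylor
  rw [hfactor, norm_smul, norm_inv, inv_mul_le_iff₀ (norm_pos_iff.2 ht)]
  rw [add_sub_cancel_left]
  refine htaylor.trans_eq ?_
  rw [norm_smul]
  ring

theorem eventually_forall_add_smul_mem_ball {r : ℝ} (hr : r < R) (x v : E) :
    ∀ᶠ t : ℂ in 𝓝 0, ∀ y ∈ ball x r, y + t • v ∈ ball x R := by
  have hsmall : ∀ᶠ t : ℂ in 𝓝 0, ‖t • v‖ < R - r :=
    (show Continuous fun t : ℂ => ‖t • v‖ by fun_prop).continuousAt.eventually_lt_const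
      (by simpa using hr)
  filter_upwards [hsmall] with t ht y hy
  rw [mem_ball_iff_norm] at hy ⊢
  rw [add_sub_right_comm]
  linarith [norm_add_le (y - x) (t • v)]

theorem tendstoUniformlyOn_slope_fderiv (hR : 0 < R)
    (hf : ∀ y ∈ ball x (3 * R), DifferentiableAt ℂ f y) (hC : ∀ y ∈ ball x (3 * R), ‖f y‖ ≤ C)
    (v : E) : TendstoUniformlyOn (fun (t : ℂ) y => t⁻¹ • (f (y + t • v) - f y))
      (fun y => fderiv ℂ f y v) (𝓝[≠] 0) (ball x (R / 2)) := by
  rw [Metric.tendstoUniformlyOn_iff]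
  intro ε hε
  have hsmall := eventually_forall_add_smul_mem_ball (half_lt_self hR) x v
  have hε : ∀ᶠ t : ℂ in 𝓝 0, C / R / R * ‖v‖ ^ 2 * ‖t‖ < ε :=
    (show Continuous fun t : ℂ => C / R / R * ‖v‖ ^ 2 * ‖t‖ by fun_prop).continuousAt
      |>.eventually_lt_const (by simpa using hε)
  filter_upwards [nhdsWithin_le_nhds hsmall, self_mem_nhdsWithin, nhdsWithin_le_nhds hε]
    with t ht ht₀ htε y hy
  rw [dist_comm, dist_eq_norm]
  exact (norm_slope_sub_fderiv_le hR hf hC (ball_subset_ball (by linarith) hy) ht₀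
    (ht y hy)).trans_lt htε

theorem differentiableAt_fderiv_apply [CompleteSpace G] (hf : ∀ᶠ y in 𝓝 x, DifferentiableAt ℂ f y)
    (v : E) : DifferentiableAt ℂ (fun y => fderiv ℂ f y v) x := by
  obtain ⟨r, hr, hball⟩ := Metric.eventually_nhds_iff_ball.1
    (hf.and (hf.self_of_nhds.continuousAt.norm.eventually_lt_const (lt_add_one ‖f x‖)))
  obtain ⟨R, rfl⟩ : ∃ R, r = 3 * R := ⟨r / 3, by ring⟩
  have hR : 0 < R := by linarith
  have hd := fun y hy => (hball y hy).1
  refine differentiableAt_of_tendstoUniformlyOn_ball (half_pos hR) ?_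
    (tendstoUniformlyOn_slope_fderiv hR hd (fun y hy => (hball y hy).2.le) v)
  filter_upwards [nhdsWithin_le_nhds (eventually_forall_add_smul_mem_ball
    (by linarith : R / 2 < 3 * R) x v)] with t ht y hy
  exact ((((differentiableAt_comp_add_right _).2 (hd _ (ht y hy))).sub
    (hd y (ball_subset_ball (by linarith) hy))).const_smul _).differentiableWithinAt

theorem contDiffOn_of_differentiableOn_complex [FiniteDimensional ℂ E] [CompleteSpace G]
    (hU : IsOpen U) (hf : DifferentiableOn ℂ f U) (m : ℕ) : ContDiffOn ℂ m f U := by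
  induction m generalizing f with
  | zero => exact contDiffOn_zero.2 hf.continuousOn
  | succ m ih =>
    rw [Nat.cast_succ]
    refine contDiffOn_succ_of_fderiv_apply hf (fun h => absurd h (by simp)) fun v => ?_
    refine (ih (f := fun y => fderiv ℂ f y v) fun y hy => ?_).congr fun y hy => ?_
    · exact (differentiableAt_fderiv_apply (hf.eventually_differentiableAt (hU.mem_nhds hy))
        v).differentiableWithinAt
    · rw [fderivWithin_of_isOpen hU hy]

end Holomorphy

section TraceFree

open Module

variable {𝕜 E : Type*} [NontriviallyNormedField 𝕜] [NormedAddCommGroup E] [NormedSpace 𝕜 E]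

/-- The pure-trace bilinear form `a(v) w + a(w) v`. -/
def pureTrace : (E →L[𝕜] 𝕜) →L[𝕜] E →L[𝕜] E →L[𝕜] E :=
  let T := ContinuousLinearMap.compL 𝕜 E 𝕜 (E →L[𝕜] E) (ContinuousLinearMap.lsmul 𝕜 𝕜)
  T + (ContinuousLinearMap.flipₗᵢ 𝕜 E E E).toContinuousLinearEquiv.toContinuousLinearMap ∘L T

theorem pureTrace_apply (a : E →L[𝕜] 𝕜) (v w : E) : pureTrace a v w = a v • w + a w • v := rfl

variable [CompleteSpace 𝕜] [FiniteDimensional 𝕜 E]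

/-- The trace as a continuous linear functional on the continuous endomorphisms. -/
def traceCLM (𝕜 E : Type*) [NontriviallyNormedField 𝕜] [CompleteSpace 𝕜] [NormedAddCommGroup E]
    [NormedSpace 𝕜 E] [FiniteDimensional 𝕜 E] : (E →L[𝕜] E) →L[𝕜] 𝕜 :=
  (LinearMap.trace 𝕜 E ∘ₗ ContinuousLinearMap.coeLM 𝕜).toContinuousLinearMap

theorem traceCLM_apply (A : E →L[𝕜] E) : traceCLM 𝕜 E A = LinearMap.trace 𝕜 E A := rfl

theorem traceCLM_id : traceCLM 𝕜 E (.id 𝕜 E) = finrank 𝕜 E :=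
  LinearMap.trace_id 𝕜 E

theorem traceCLM_smulRight (a : E →L[𝕜] 𝕜) (x : E) : traceCLM 𝕜 E (a.smulRight x) = a x :=
  LinearMap.trace_smulRight _ _

/-- The `1`-form `a(v) = tr (g v) / (dim E + 1)` attached to a symmetric `E`-valued bilinear form
`g`, normalised so that `a` is recovered from the pure-trace form `a(v) w + a(w) v`. -/
def traceForm : (E →L[𝕜] E →L[𝕜] E) →L[𝕜] E →L[𝕜] 𝕜 :=
  ((finrank 𝕜 E : 𝕜) + 1)⁻¹ • ContinuousLinearMap.compL 𝕜 E (E →L[𝕜] E) 𝕜 (traceCLM 𝕜 E)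

theorem traceForm_apply (g : E →L[𝕜] E →L[𝕜] E) (v : E) :
    traceForm g v = ((finrank 𝕜 E : 𝕜) + 1)⁻¹ * traceCLM 𝕜 E (g v) := rfl

/-- The trace-free part of an `E`-valued bilinear form; applied to the pre-Schwarzian it is the
Schwarzian of Oda. -/
def traceFreePart : (E →L[𝕜] E →L[𝕜] E) →L[𝕜] E →L[𝕜] E →L[𝕜] E :=
  .id 𝕜 _ - pureTrace ∘L traceForm

theorem traceFreePart_apply (g : E →L[𝕜] E →L[𝕜] E) (v w : E) :
    traceFreePart g v w = g v w - (traceForm g v • w + traceForm g w • v) := rfl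

theorem traceCLM_apply_eq_mul_traceForm [CharZero 𝕜] (g : E →L[𝕜] E →L[𝕜] E) (v : E) :
    traceCLM 𝕜 E (g v) = ((finrank 𝕜 E : 𝕜) + 1) * traceForm g v := by
  rw [traceForm_apply, mul_inv_cancel_left₀ (Nat.cast_add_one_ne_zero _)]

theorem traceForm_pureTrace [CharZero 𝕜] (a : E →L[𝕜] 𝕜) : traceForm (pureTrace a) = a := by
  ext v
  have hsplit : pureTrace a v = a v • ContinuousLinearMap.id 𝕜 E + a.smulRight v := rfl
  rw [traceForm_apply, hsplit, map_add, map_smul, traceCLM_id, traceCLM_smulRight, smul_eq_mul,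
    ← mul_add_one, mul_comm (a v), inv_mul_cancel_left₀ (Nat.cast_add_one_ne_zero _)]

theorem traceFreePart_pureTrace [CharZero 𝕜] (a : E →L[𝕜] 𝕜) :
    traceFreePart (pureTrace a) = 0 := by
  rw [traceFreePart, sub_apply, ContinuousLinearMap.comp_apply, traceForm_pureTrace]
  exact sub_self _

theorem traceFreePart_symm {g : E →L[𝕜] E →L[𝕜] E} (hg : ∀ v w, g v w = g w v) (v w : E) :
    traceFreePart g v w = traceFreePart g w v := by
  rw [traceFreePart_apply, traceFreePart_apply, hg, add_comm]

theorem traceForm_traceFreePart_self (g : E →L[𝕜] E →L[𝕜] E) (e : E) :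
    traceForm g (traceFreePart g e e) = traceForm g (g e e) - 2 * traceForm g e ^ 2 := by
  simp only [traceFreePart_apply, map_sub, map_add, map_smul, smul_eq_mul]
  ring

theorem traceCLM_comp_self [CharZero 𝕜] (g : E →L[𝕜] E →L[𝕜] E) (e : E) :
    traceCLM 𝕜 E (g e ∘L g e) = traceCLM 𝕜 E (traceFreePart g e ∘L traceFreePart g e)
      + 2 * traceForm g (traceFreePart g e e) + (finrank 𝕜 E + 3) * traceForm g e ^ 2 := by
  have hexpand : traceFreePart g e ∘L traceFreePart g e = g e ∘L g e
      - (2 * traceForm g e) • g e - (traceForm g).smulRight (g e e)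
      + traceForm g e ^ 2 • .id 𝕜 E + (3 * traceForm g e) • (traceForm g).smulRight e
      - (traceForm g ∘L g e).smulRight e := by
    ext w
    simp only [ContinuousLinearMap.comp_apply, sub_apply, add_apply, smul_apply,
      ContinuousLinearMap.id_apply,
      ContinuousLinearMap.smulRight_apply, traceFreePart_apply, map_sub, map_add, map_smul]
    module
  simp only [hexpand, map_add, map_sub, map_smul, traceCLM_smulRight, traceCLM_id, smul_eq_mul,
    ContinuousLinearMap.comp_apply, traceCLM_apply_eq_mul_traceForm, traceForm_traceFreePart_self]
  ring

/-- Here `D` plays the derivative of a field of bilinear forms with value `g` at a point, and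
`hflat` is the vanishing of the curvature of the connection that the field defines. -/
theorem traceForm_apply_self_of_flat [CharZero 𝕜] {g : E →L[𝕜] E →L[𝕜] E}
    {D : E →L[𝕜] E →L[𝕜] E →L[𝕜] E} (hg : ∀ v w, g v w = g w v)
    (hflat : ∀ v w x, D v x w - D w x v + g v (g x w) - g w (g x v) = 0) (e : E) :
    (finrank 𝕜 E - 1) * traceForm (D e) e =
      traceCLM 𝕜 E (((traceFreePart ∘L D).flip e).flip e)
        + (finrank 𝕜 E - 1) * traceForm g (traceFreePart g e e)
        + (finrank 𝕜 E - 1) * traceForm g e ^ 2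
        - traceCLM 𝕜 E (traceFreePart g e ∘L traceFreePart g e) := by
  have hricci : (D.flip e).flip e - D e e + g (g e e) - g e ∘L g e = 0 := by
    ext v
    simpa [hg (g e e) v] using hflat v e e
  have hdiv : ((traceFreePart ∘L D).flip e).flip e =
      (D.flip e).flip e - (2 : 𝕜) • ((traceForm ∘L D).flip e).smulRight e := by
    ext v
    simp only [ContinuousLinearMap.flip_apply, ContinuousLinearMap.comp_apply, traceFreePart_apply,
      sub_apply, smul_apply, ContinuousLinearMap.smulRight_apply]
    module
  have htrace := congrArg (traceCLM 𝕜 E) hricci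
  rw [map_sub, map_add, map_sub, map_zero, traceCLM_apply_eq_mul_traceForm (D e),
    traceCLM_apply_eq_mul_traceForm g] at htrace
  rw [hdiv, map_sub, map_smul, traceCLM_smulRight, ContinuousLinearMap.flip_apply,
    ContinuousLinearMap.comp_apply, smul_eq_mul]
  linear_combination -htrace - traceCLM_comp_self g e
    - (finrank 𝕜 E + 1) * traceForm_traceFreePart_self g e

end TraceFree

section PreSchwarzian

open Module Filter Topology

variable {E E' G : Type*} [NormedAddCommGroup E] [NormedSpace ℂ E] [NormedAddCommGroup E']
  [NormedSpace ℂ E'] [NormedAddCommGroup G] [NormedSpace ℂ G] {F : E → G} {φ : E' → E} {U : Set E}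
  {V : Set E'} {z : E} {y : E'}

/-- The holomorphic maps on `U` whose derivative is invertible at every point of `U`. -/
structure IsLocallyBiholomorphicOn (F : E → G) (U : Set E) : Prop where
  differentiableOn : DifferentiableOn ℂ F U
  isInvertible_fderiv : ∀ z ∈ U, (fderiv ℂ F z).IsInvertible

/-- The pre-Schwarzian `DF⁻¹ D²F`, an `E`-valued symmetric bilinear form at each point. -/
def preSchwarzian (F : E → G) (z : E) : E →L[ℂ] E →L[ℂ] E :=
  ContinuousLinearMap.compL ℂ E G E (fderiv ℂ F z).inverse ∘L fderiv ℂ (fderiv ℂ F) z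

theorem preSchwarzian_apply (F : E → G) (z v w : E) :
    preSchwarzian F z v w = (fderiv ℂ F z).inverse (fderiv ℂ (fderiv ℂ F) z v w) := rfl

theorem fderiv_preSchwarzian_apply (hz : (fderiv ℂ F z).IsInvertible) (v w : E) :
    fderiv ℂ F z (preSchwarzian F z v w) = fderiv ℂ (fderiv ℂ F) z v w :=
  hz.self_apply_inverse _

theorem preSchwarzian_symm (hF : ContDiffAt ℂ 2 F z) (v w : E) :
    preSchwarzian F z v w = preSchwarzian F z w v := by
  rw [preSchwarzian_apply, preSchwarzian_apply, (hF.isSymmSndFDerivAt (by simp)).eq]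

theorem fderiv_fderiv_comp_apply (hF : ContDiffAt ℂ 2 F (φ y)) (hφ : ContDiffAt ℂ 2 φ y)
    (v w : E') :
    fderiv ℂ (fderiv ℂ (F ∘ φ)) y v w =
      fderiv ℂ (fderiv ℂ F) (φ y) (fderiv ℂ φ y v) (fderiv ℂ φ y w)
        + fderiv ℂ F (φ y) (fderiv ℂ (fderiv ℂ φ) y v w) := by
  have hφ' : HasFDerivAt φ (fderiv ℂ φ y) y := (hφ.differentiableAt (by simp)).hasFDerivAt
  have hchain : fderiv ℂ (F ∘ φ) =ᶠ[𝓝 y] fun x => (fderiv ℂ F ∘ φ) x ∘L fderiv ℂ φ x := by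
    filter_upwards [hφ.eventually (by simp),
      hφ.continuousAt.eventually (hF.eventually (by simp))] with x hx hFx
    exact fderiv_comp x (hFx.differentiableAt (by simp)) (hx.differentiableAt (by simp))
  have hDF := ((hF.fderiv_right (m := 1) le_rfl).differentiableAt one_ne_zero).hasFDerivAt
  have hDφ := ((hφ.fderiv_right (m := 1) le_rfl).differentiableAt one_ne_zero).hasFDerivAt
  have hsnd := (hDF.comp y hφ').clm_comp hDφ
  rw [hchain.fderiv_eq, HasFDerivAt.fderiv hsnd, add_comm]
  rfl

theorem fderiv_preSchwarzian_comp (hF : ContDiffAt ℂ 2 F (φ y))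
    (hF' : (fderiv ℂ F (φ y)).IsInvertible) (hφ : ContDiffAt ℂ 2 φ y)
    (hφ' : (fderiv ℂ φ y).IsInvertible) (v w : E') :
    fderiv ℂ φ y (preSchwarzian (F ∘ φ) y v w) =
      preSchwarzian F (φ y) (fderiv ℂ φ y v) (fderiv ℂ φ y w)
        + fderiv ℂ φ y (preSchwarzian φ y v w) := by
  have hcomp : fderiv ℂ (F ∘ φ) y = fderiv ℂ F (φ y) ∘L fderiv ℂ φ y :=
    fderiv_comp y (hF.differentiableAt (by simp)) (hφ.differentiableAt (by simp))
  refine hF'.injective ?_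
  rw [← ContinuousLinearMap.comp_apply, ← hcomp,
    fderiv_preSchwarzian_apply (by rw [hcomp]; exact hF'.comp hφ'), fderiv_fderiv_comp_apply hF hφ,
    map_add, fderiv_preSchwarzian_apply hF', fderiv_preSchwarzian_apply hφ']

namespace IsLocallyBiholomorphicOn

theorem mono {U' : Set E} (hF : IsLocallyBiholomorphicOn F U) (h : U' ⊆ U) :
    IsLocallyBiholomorphicOn F U' :=
  ⟨hF.differentiableOn.mono h, fun z hz => hF.isInvertible_fderiv z (h hz)⟩

theorem comp (hF : IsLocallyBiholomorphicOn F U) (hφ : IsLocallyBiholomorphicOn φ V)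
    (hU : IsOpen U) (hV : IsOpen V) (hVU : Set.MapsTo φ V U) :
    IsLocallyBiholomorphicOn (F ∘ φ) V where
  differentiableOn := hF.differentiableOn.comp hφ.differentiableOn hVU
  isInvertible_fderiv y hy := by
    rw [fderiv_comp y (hF.differentiableOn.differentiableAt (hU.mem_nhds (hVU hy)))
      (hφ.differentiableOn.differentiableAt (hV.mem_nhds hy))]
    exact (hF.isInvertible_fderiv _ (hVU hy)).comp (hφ.isInvertible_fderiv y hy)

variable [FiniteDimensional ℂ E] [CompleteSpace G]

theorem contDiffAt (hF : IsLocallyBiholomorphicOn F U) (hU : IsOpen U) (hz : z ∈ U) (m : ℕ) :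
    ContDiffAt ℂ m F z :=
  (contDiffOn_of_differentiableOn_complex hU hF.differentiableOn m).contDiffAt (hU.mem_nhds hz)

theorem differentiableAt_preSchwarzian (hF : IsLocallyBiholomorphicOn F U) (hU : IsOpen U)
    (hz : z ∈ U) : DifferentiableAt ℂ (preSchwarzian F) z := by
  have hDF : ContDiffAt ℂ 2 (fderiv ℂ F) z := (hF.contDiffAt hU hz 3).fderiv_right le_rfl
  have hinv : DifferentiableAt ℂ (fun y => (fderiv ℂ F y).inverse) z :=
    ((hF.isInvertible_fderiv z hz).contDiffAt_map_inverse (n := 1)).differentiableAt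
      one_ne_zero |>.comp z (hDF.differentiableAt two_ne_zero)
  exact ((ContinuousLinearMap.compL ℂ E G E).differentiableAt.comp z hinv).clm_comp
    ((hDF.fderiv_right (m := 1) le_rfl).differentiableAt one_ne_zero)

-- Differentiate `D(DF) = DF ∘ preSchwarzian F` once more and use the symmetry of `D²(DF)`.
theorem preSchwarzian_flat (hF : IsLocallyBiholomorphicOn F U) (hU : IsOpen U) (hz : z ∈ U)
    (v w x : E) :
    fderiv ℂ (preSchwarzian F) z v x w - fderiv ℂ (preSchwarzian F) z w x v
      + preSchwarzian F z v (preSchwarzian F z x w)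
      - preSchwarzian F z w (preSchwarzian F z x v) = 0 := by
  have hDF : ∀ y ∈ U, HasFDerivAt (fderiv ℂ F) (fderiv ℂ (fderiv ℂ F) y) y := fun y hy =>
    (((hF.contDiffAt hU hy 2).fderiv_right (m := 1) le_rfl).differentiableAt
      one_ne_zero).hasFDerivAt
  have hDFx : ∀ᶠ y in 𝓝 z, HasFDerivAt (fun y => fderiv ℂ F y x)
      (fderiv ℂ F y ∘L preSchwarzian F y x) y := by
    filter_upwards [hU.mem_nhds hz] with y hy
    refine ((hDF y hy).clm_apply (hasFDerivAt_const x y)).congr_fderiv ?_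
    ext w
    simp [fderiv_preSchwarzian_apply (hF.isInvertible_fderiv y hy),
      ((hF.contDiffAt hU hy 2).isSymmSndFDerivAt (by simp)).eq w x]
  have hΓx : HasFDerivAt (fun y => preSchwarzian F y x) ((fderiv ℂ (preSchwarzian F) z).flip x) z :=
    ((hF.differentiableAt_preSchwarzian hU hz).hasFDerivAt.clm_apply
      (hasFDerivAt_const x z)).congr_fderiv (by simp)
  have hsymm := second_derivative_symmetric_of_eventually hDFx ((hDF z hz).clm_comp hΓx) v w
  simp only [add_apply, ContinuousLinearMap.comp_apply, ContinuousLinearMap.compL_apply,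
    ContinuousLinearMap.flip_apply,
    ← fderiv_preSchwarzian_apply (hF.isInvertible_fderiv z hz)] at hsymm
  refine (hF.isInvertible_fderiv z hz).injective ?_
  simp only [map_add, map_sub, map_zero]
  linear_combination (norm := module) hsymm

end IsLocallyBiholomorphicOn

end PreSchwarzian

section Schwarzian

open Module

variable {E E' G : Type*} [NormedAddCommGroup E] [NormedSpace ℂ E] [FiniteDimensional ℂ E]
  [NormedAddCommGroup E'] [NormedSpace ℂ E'] [FiniteDimensional ℂ E']
  [NormedAddCommGroup G] [NormedSpace ℂ G] {F : E → G} {φ : E' → E} {U : Set E} {z : E} {y : E'}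

/-- The `1`-form `(dim E + 1)⁻¹ d log det DF`, written without a choice of bases as a trace of
`DF⁻¹ D²F`. -/
def logJacobianForm (F : E → G) (z : E) : E →L[ℂ] ℂ := traceForm (preSchwarzian F z)

/-- The Schwarzian of Oda: `schwarzian F z v v` is `SF(z)(v)`. -/
def schwarzian (F : E → G) (z : E) : E →L[ℂ] E →L[ℂ] E := traceFreePart (preSchwarzian F z)

theorem schwarzian_symm (hF : ContDiffAt ℂ 2 F z) (v w : E) :
    schwarzian F z v w = schwarzian F z w v :=
  traceFreePart_symm (preSchwarzian_symm hF) v w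

theorem preSchwarzian_apply_self (F : E → G) (z v : E) :
    preSchwarzian F z v v = schwarzian F z v v + (2 * logJacobianForm F z v) • v := by
  rw [schwarzian, traceFreePart_apply, logJacobianForm]
  module

theorem logJacobianForm_comp (hF : ContDiffAt ℂ 2 F (φ y)) (hF' : (fderiv ℂ F (φ y)).IsInvertible)
    (hφ : ContDiffAt ℂ 2 φ y) (hφ' : (fderiv ℂ φ y).IsInvertible) (v : E') :
    logJacobianForm (F ∘ φ) y v =
      logJacobianForm F (φ y) (fderiv ℂ φ y v) + logJacobianForm φ y v := by
  obtain ⟨T, hT⟩ := hφ'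
  have hconj : preSchwarzian (F ∘ φ) y v =
      T.symm.conjContinuousAlgEquiv (preSchwarzian F (φ y) (T v)) + preSchwarzian φ y v := by
    ext w
    apply T.injective
    have h := fderiv_preSchwarzian_comp hF hF' hφ ⟨T, hT⟩ v w
    rw [← hT] at h
    simpa using h
  have htrace : traceCLM ℂ E' (T.symm.conjContinuousAlgEquiv (preSchwarzian F (φ y) (T v))) =
      traceCLM ℂ E (preSchwarzian F (φ y) (T v)) :=
    LinearMap.trace_conj' (preSchwarzian F (φ y) (T v)).toLinearMap T.symm.toLinearEquiv
  simp only [logJacobianForm, traceForm_apply, hconj, map_add, htrace, mul_add, ← hT,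
    T.toLinearEquiv.finrank_eq]
  rfl

theorem fderiv_schwarzian_comp (hF : ContDiffAt ℂ 2 F (φ y))
    (hF' : (fderiv ℂ F (φ y)).IsInvertible) (hφ : ContDiffAt ℂ 2 φ y)
    (hφ' : (fderiv ℂ φ y).IsInvertible) (v w : E') :
    fderiv ℂ φ y (schwarzian (F ∘ φ) y v w) =
      schwarzian F (φ y) (fderiv ℂ φ y v) (fderiv ℂ φ y w)
        + fderiv ℂ φ y (schwarzian φ y v w) := by
  have ha := logJacobianForm_comp hF hF' hφ hφ'
  have hΓ := fderiv_preSchwarzian_comp hF hF' hφ hφ' v w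
  simp only [logJacobianForm] at ha
  simp only [schwarzian, traceFreePart_apply, map_sub, map_add, map_smul, hΓ, ha]
  module

namespace IsLocallyBiholomorphicOn

variable [CompleteSpace G]

theorem differentiableAt_logJacobianForm (hF : IsLocallyBiholomorphicOn F U) (hU : IsOpen U)
    (hz : z ∈ U) : DifferentiableAt ℂ (logJacobianForm F) z :=
  (traceForm (𝕜 := ℂ) (E := E)).differentiableAt.comp z (hF.differentiableAt_preSchwarzian hU hz)

theorem differentiableAt_schwarzian (hF : IsLocallyBiholomorphicOn F U) (hU : IsOpen U)
    (hz : z ∈ U) : DifferentiableAt ℂ (schwarzian F) z :=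
  (traceFreePart (𝕜 := ℂ) (E := E)).differentiableAt.comp z
    (hF.differentiableAt_preSchwarzian hU hz)

theorem fderiv_logJacobianForm_apply_self (hF : IsLocallyBiholomorphicOn F U) (hU : IsOpen U)
    (hz : z ∈ U) (e : E) :
    (finrank ℂ E - 1) * fderiv ℂ (logJacobianForm F) z e e =
      traceCLM ℂ E (((fderiv ℂ (schwarzian F) z).flip e).flip e)
        + (finrank ℂ E - 1) * logJacobianForm F z (schwarzian F z e e)
        + (finrank ℂ E - 1) * logJacobianForm F z e ^ 2
        - traceCLM ℂ E (schwarzian F z e ∘L schwarzian F z e) := by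
  have hΓ := (hF.differentiableAt_preSchwarzian hU hz).hasFDerivAt
  have ha : fderiv ℂ (logJacobianForm F) z = traceForm ∘L fderiv ℂ (preSchwarzian F) z :=
    ((traceForm (𝕜 := ℂ) (E := E)).hasFDerivAt.comp z hΓ).fderiv
  have hS : fderiv ℂ (schwarzian F) z = traceFreePart ∘L fderiv ℂ (preSchwarzian F) z :=
    ((traceFreePart (𝕜 := ℂ) (E := E)).hasFDerivAt.comp z hΓ).fderiv
  rw [ha, hS]
  exact traceForm_apply_self_of_flat (preSchwarzian_symm (hF.contDiffAt hU hz 2))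
    (hF.preSchwarzian_flat hU hz) e

end IsLocallyBiholomorphicOn

end Schwarzian

section FractionalLinear

open Topology

variable {E G : Type*} [NormedAddCommGroup E] [NormedSpace ℂ E] [NormedAddCommGroup G]
  [NormedSpace ℂ G] {ℓ : E →L[ℂ] ℂ} {A : E →L[ℂ] G} {b : G} {z : E}

/-- The fractional linear map `(b + A z) / (1 + ℓ z)`, with value `0` where the denominator
vanishes. -/
def fractionalLinear (ℓ : E →L[ℂ] ℂ) (A : E →L[ℂ] G) (b : G) (z : E) : G :=
  (1 + ℓ z)⁻¹ • (b + A z)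

theorem hasFDerivAt_inv_one_add (hz : 1 + ℓ z ≠ 0) :
    HasFDerivAt (fun z => (1 + ℓ z)⁻¹) (-((1 + ℓ z) ^ 2)⁻¹ • ℓ) z :=
  (hasDerivAt_inv hz).comp_hasFDerivAt z (ℓ.hasFDerivAt.const_add 1)

theorem hasFDerivAt_fractionalLinear (hz : 1 + ℓ z ≠ 0) :
    HasFDerivAt (fractionalLinear ℓ A b)
      ((1 + ℓ z)⁻¹ • (A - ℓ.smulRight (fractionalLinear ℓ A b z))) z := by
  refine ((hasFDerivAt_inv_one_add hz).smul (A.hasFDerivAt.const_add b)).congr_fderiv ?_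
  ext v
  simp only [add_apply, sub_apply, smul_apply, ContinuousLinearMap.smulRight_apply,
    fractionalLinear, smul_eq_mul]
  match_scalars <;> field_simp

theorem eventually_one_add_ne_zero (hz : 1 + ℓ z ≠ 0) : ∀ᶠ y in 𝓝 z, 1 + ℓ y ≠ 0 :=
  (show Continuous fun y => 1 + ℓ y by fun_prop).continuousAt.eventually_ne hz

theorem fderiv_fderiv_fractionalLinear_apply (hz : 1 + ℓ z ≠ 0) (v w : E) :
    fderiv ℂ (fderiv ℂ (fractionalLinear ℓ A b)) z v w =
      fderiv ℂ (fractionalLinear ℓ A b) z (pureTrace (-(1 + ℓ z)⁻¹ • ℓ) v w) := by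
  have hfderiv : fderiv ℂ (fractionalLinear ℓ A b) =ᶠ[𝓝 z]
      fun y => (1 + ℓ y)⁻¹ • (A - ContinuousLinearMap.smulRightL ℂ E G ℓ
        (fractionalLinear ℓ A b y)) :=
    (eventually_one_add_ne_zero hz).mono fun y hy => (hasFDerivAt_fractionalLinear hy).fderiv
  have hsnd := (hasFDerivAt_inv_one_add hz).smul
    (((ContinuousLinearMap.smulRightL ℂ E G ℓ).hasFDerivAt.comp z
      (hasFDerivAt_fractionalLinear (A := A) (b := b) hz)).const_sub A)
  rw [(hsnd.congr_of_eventuallyEq hfderiv).fderiv, hfderiv.eq_of_nhds]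
  simp only [pureTrace_apply, add_apply, sub_apply, neg_apply, smul_apply,
    ContinuousLinearMap.comp_apply, ContinuousLinearMap.smulRight_apply,
    ContinuousLinearMap.smulRightL_apply_apply, map_add, map_smul, smul_eq_mul, Function.comp_apply]
  match_scalars <;> field_simp
  ring

theorem preSchwarzian_fractionalLinear (hz : 1 + ℓ z ≠ 0)
    (hinv : (fderiv ℂ (fractionalLinear ℓ A b) z).IsInvertible) :
    preSchwarzian (fractionalLinear ℓ A b) z = pureTrace (-(1 + ℓ z)⁻¹ • ℓ) := by
  ext v w
  rw [preSchwarzian_apply, fderiv_fderiv_fractionalLinear_apply hz, hinv.inverse_apply_self]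

end FractionalLinear

section BallAutomorphism

open ComplexConjugate Metric

local notation "⟪" x ", " y "⟫" => inner ℂ x y

variable {E : Type*} [NormedAddCommGroup E] {c z v : E} {r : ℝ}

theorem one_sub_norm_sq_pos (hz : z ∈ ball (0 : E) 1) : 0 < 1 - ‖z‖ ^ 2 :=
  sub_pos.2 (pow_lt_one₀ (norm_nonneg z) (mem_ball_zero_iff.1 hz) two_ne_zero)

theorem one_sub_mul_norm_sq_pos (hr : r ^ 2 ≤ 1) (hz : z ∈ ball (0 : E) 1) :
    0 < 1 - r ^ 2 * ‖z‖ ^ 2 := by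
  nlinarith [one_sub_norm_sq_pos hz, sq_nonneg ‖z‖]

/-- `s(c) = √(1 - |c|²)`. -/
def ballScale (c : E) : ℝ := √(1 - ‖c‖ ^ 2)

theorem one_add_ballScale_ne_zero (c : E) : (1 + ballScale c : ℂ) ≠ 0 := by
  exact_mod_cast (add_pos_of_pos_of_nonneg one_pos (Real.sqrt_nonneg _)).ne'

theorem ballScale_pos (hc : c ∈ ball (0 : E) 1) : 0 < ballScale c :=
  Real.sqrt_pos.2 (one_sub_norm_sq_pos hc)

variable [InnerProductSpace ℂ E]

/-- The Bergman metric of the unit ball as a squared norm, without the factor `dim E + 1`. -/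
def bergmanNormSq (z v : E) : ℝ :=
  ‖v‖ ^ 2 / (1 - ‖z‖ ^ 2) + ‖⟪z, v⟫‖ ^ 2 / (1 - ‖z‖ ^ 2) ^ 2

theorem bergmanNormSq_zero_left (v : E) : bergmanNormSq 0 v = ‖v‖ ^ 2 := by
  simp [bergmanNormSq]

theorem bergmanNormSq_smul (z v : E) (t : ℂ) :
    bergmanNormSq z (t • v) = ‖t‖ ^ 2 * bergmanNormSq z v := by
  rw [bergmanNormSq, bergmanNormSq, inner_smul_right, norm_smul, norm_mul]
  ring

theorem norm_sq_le_mul_bergmanNormSq (hz : z ∈ ball (0 : E) 1) (v : E) :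
    ‖v‖ ^ 2 ≤ (1 - ‖z‖ ^ 2) * bergmanNormSq z v := by
  have hz' := one_sub_norm_sq_pos hz
  rw [bergmanNormSq, mul_add, mul_div_cancel₀ _ hz'.ne']
  exact le_add_of_nonneg_right (by positivity)

theorem bergmanNormSq_nonneg (hz : z ∈ ball (0 : E) 1) (v : E) : 0 ≤ bergmanNormSq z v :=
  nonneg_of_mul_nonneg_right ((sq_nonneg _).trans (norm_sq_le_mul_bergmanNormSq hz v))
    (one_sub_norm_sq_pos hz)

theorem bergmanNormSq_le_div_sq (hz : z ∈ ball (0 : E) 1) (v : E) :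
    bergmanNormSq z v ≤ (‖v‖ / (1 - ‖z‖ ^ 2)) ^ 2 := by
  have hz' := one_sub_norm_sq_pos hz
  have hinner : ‖⟪z, v⟫‖ ^ 2 ≤ ‖z‖ ^ 2 * ‖v‖ ^ 2 := by
    rw [← mul_pow]
    exact pow_le_pow_left₀ (norm_nonneg _) (norm_inner_le_norm z v) 2
  have hcancel : ‖v‖ ^ 2 / (1 - ‖z‖ ^ 2) = ‖v‖ ^ 2 * (1 - ‖z‖ ^ 2) / (1 - ‖z‖ ^ 2) ^ 2 := by
    field_simp
  rw [bergmanNormSq, hcancel, ← add_div, div_pow]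
  gcongr
  linarith

theorem bergmanNormSq_eq_zero (hz : z ∈ ball (0 : E) 1) : bergmanNormSq z v = 0 ↔ v = 0 := by
  refine ⟨fun h => ?_, fun h => by simp [h, bergmanNormSq]⟩
  simpa [h] using norm_sq_le_mul_bergmanNormSq hz v

/-- The linear part `s(c) v + ⟨c, v⟩ c / (1 + s(c))` of the numerator of `ballAut c`. -/
def ballBoost (c : E) : E →L[ℂ] E :=
  (ballScale c : ℂ) • .id ℂ E + ((1 + ballScale c : ℂ)⁻¹ • innerSL ℂ c).smulRight c

/-- The automorphism of the unit ball that sends `0` to `c`. -/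
def ballAut (c : E) : E → E := fractionalLinear (innerSL ℂ c) (ballBoost c) c

theorem ballAut_zero (c : E) : ballAut c 0 = c := by simp [ballAut, fractionalLinear]

theorem ofReal_ballScale_sq (hc : ‖c‖ ≤ 1) : (ballScale c : ℂ) ^ 2 = 1 - ⟪c, c⟫ := by
  rw [inner_self_eq_norm_sq_to_K, ballScale, ← Complex.ofReal_pow,
    Real.sq_sqrt (sub_nonneg.2 (pow_le_one₀ (norm_nonneg c) hc))]
  simp

theorem ballBoost_apply (c v : E) :
    ballBoost c v = (ballScale c : ℂ) • v + ((1 + ballScale c : ℂ)⁻¹ * ⟪c, v⟫) • c := rfl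

theorem continuous_ballBoost : Continuous (ballBoost : E → E →L[ℂ] E) := by
  have hs : Continuous fun c : E => (ballScale c : ℂ) := by
    unfold ballScale
    fun_prop
  have hinner : Continuous fun c : E => (1 + ballScale c : ℂ)⁻¹ • innerSL ℂ c :=
    ((continuous_const.add hs).inv₀ one_add_ballScale_ne_zero).smul (innerSL ℂ).continuous
  exact (hs.smul continuous_const).add
    (((ContinuousLinearMap.smulRightL ℂ E E).continuous.comp hinner).clm_apply continuous_id)

theorem inner_ballBoost_right (hc : ‖c‖ ≤ 1) (v : E) : ⟪c, ballBoost c v⟫ = ⟪c, v⟫ := by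
  have hs := one_add_ballScale_ne_zero c
  rw [ballBoost_apply, inner_add_right, inner_smul_right, inner_smul_right]
  field_simp
  linear_combination ⟪c, v⟫ * ofReal_ballScale_sq hc

theorem inner_ballBoost_ballBoost (hc : ‖c‖ ≤ 1) (v w : E) :
    ⟪ballBoost c v, ballBoost c w⟫ = ⟪v, c⟫ * ⟪c, w⟫ + (ballScale c : ℂ) ^ 2 * ⟪v, w⟫ := by
  have hs := one_add_ballScale_ne_zero c
  rw [ballBoost_apply c v, inner_add_left, inner_smul_left, inner_smul_left,
    inner_ballBoost_right hc, ballBoost_apply, inner_add_right, inner_smul_right, inner_smul_right]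
  simp only [map_mul, map_inv₀, map_add, map_one, Complex.conj_ofReal, inner_conj_symm]
  field_simp
  ring

theorem one_add_inner_ne_zero (hc : ‖c‖ ≤ 1) (hz : z ∈ ball (0 : E) 1) : 1 + ⟪c, z⟫ ≠ 0 := by
  intro h
  have hnorm : ‖⟪c, z⟫‖ = 1 := by rw [eq_neg_of_add_eq_zero_right h, norm_neg, norm_one]
  have hcz := norm_inner_le_norm (𝕜 := ℂ) c z
  rw [mem_ball_zero_iff] at hz
  nlinarith [norm_nonneg z]

theorem one_add_inner_smul_ballAut (hc : ‖c‖ ≤ 1) (hz : z ∈ ball (0 : E) 1) :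
    (1 + ⟪c, z⟫) • ballAut c z = c + ballBoost c z :=
  smul_inv_smul₀ (one_add_inner_ne_zero hc hz) _

theorem fderiv_ballAut_apply (hc : ‖c‖ ≤ 1) (hz : z ∈ ball (0 : E) 1) (v : E) :
    fderiv ℂ (ballAut c) z v = (1 + ⟪c, z⟫)⁻¹ • (ballBoost c v - ⟪c, v⟫ • ballAut c z) := by
  rw [ballAut, (hasFDerivAt_fractionalLinear (one_add_inner_ne_zero hc hz)).fderiv]
  rfl

theorem fderiv_ballAut_zero (hc : ‖c‖ ≤ 1) :
    fderiv ℂ (ballAut c) 0 = ballBoost c - (innerSL ℂ c).smulRight c := by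
  ext v
  rw [fderiv_ballAut_apply hc (mem_ball_self one_pos)]
  simp [ballAut_zero]

theorem inner_ballAut_ballBoost (hc : ‖c‖ ≤ 1) (hz : z ∈ ball (0 : E) 1) (v : E) :
    ⟪ballAut c z, ballBoost c v⟫ =
      ⟪c, v⟫ + (ballScale c : ℂ) ^ 2 * ⟪z, v⟫ / conj (1 + ⟪c, z⟫) := by
  have hden := (map_ne_zero (starRingEnd ℂ)).2 (one_add_inner_ne_zero hc hz)
  have h := congrArg (⟪·, ballBoost c v⟫) (one_add_inner_smul_ballAut hc hz)
  simp only [inner_smul_left, inner_add_left, inner_ballBoost_right hc,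
    inner_ballBoost_ballBoost hc] at h
  rw [← mul_right_inj' hden, h, mul_add, mul_div_cancel₀ _ hden, map_add, map_one, inner_conj_symm]
  ring

theorem one_sub_inner_ballAut_self (hc : ‖c‖ ≤ 1) (hz : z ∈ ball (0 : E) 1) :
    1 - ⟪ballAut c z, ballAut c z⟫ =
      (ballScale c : ℂ) ^ 2 * (1 - ⟪z, z⟫) / (conj (1 + ⟪c, z⟫) * (1 + ⟪c, z⟫)) := by
  have hden := one_add_inner_ne_zero hc hz
  have hden' := (map_ne_zero (starRingEnd ℂ)).2 hden
  have h := congrArg (fun x => ⟪x, x⟫) (one_add_inner_smul_ballAut hc hz)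
  simp only [inner_smul_left, inner_smul_right, inner_add_left, inner_add_right,
    inner_ballBoost_right hc, inner_ballBoost_ballBoost hc,
    ← inner_conj_symm (ballBoost c z) c, inner_conj_symm z c] at h
  rw [eq_div_iff (mul_ne_zero hden' hden)]
  simp only [map_add, map_one, inner_conj_symm] at h ⊢
  linear_combination -h - ofReal_ballScale_sq hc

theorem ofReal_one_sub_norm_sq (z : E) : ((1 - ‖z‖ ^ 2 : ℝ) : ℂ) = 1 - ⟪z, z⟫ := by
  rw [inner_self_eq_norm_sq_to_K]
  push_cast
  rfl

theorem one_sub_inner_self_ne_zero (hz : z ∈ ball (0 : E) 1) : 1 - ⟪z, z⟫ ≠ 0 := by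
  rw [← ofReal_one_sub_norm_sq]
  exact_mod_cast (one_sub_norm_sq_pos hz).ne'

theorem mapsTo_ballAut (hc : c ∈ ball (0 : E) 1) :
    Set.MapsTo (ballAut c) (ball 0 1) (ball 0 1) := by
  intro z hz
  have hc' := (mem_ball_zero_iff.1 hc).le
  have hden := norm_pos_iff.2 (one_add_inner_ne_zero hc' hz)
  have h := one_sub_inner_ballAut_self hc' hz
  rw [← ofReal_one_sub_norm_sq, ← ofReal_one_sub_norm_sq, Complex.conj_mul'] at h
  have h' : 1 - ‖ballAut c z‖ ^ 2 = ballScale c ^ 2 * (1 - ‖z‖ ^ 2) / ‖1 + ⟪c, z⟫‖ ^ 2 := by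
    exact_mod_cast h
  have hpos : 0 < 1 - ‖ballAut c z‖ ^ 2 := by
    have := ballScale_pos hc
    have := one_sub_norm_sq_pos hz
    rw [h']
    positivity
  exact mem_ball_zero_iff.2 ((sq_lt_one_iff₀ (norm_nonneg _)).1 (sub_pos.1 hpos))

theorem inner_ballAut_fderiv_ballAut (hc : c ∈ ball (0 : E) 1) (hz : z ∈ ball (0 : E) 1) (v : E) :
    ⟪ballAut c z, fderiv ℂ (ballAut c) z v⟫ / (1 - ⟪ballAut c z, ballAut c z⟫) =
      ⟪z, v⟫ / (1 - ⟪z, z⟫) + ⟪c, v⟫ / (1 + ⟪c, z⟫) := by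
  have hc' := (mem_ball_zero_iff.1 hc).le
  have hden := one_add_inner_ne_zero hc' hz
  have hden' := (map_ne_zero (starRingEnd ℂ)).2 hden
  have hz' := one_sub_inner_self_ne_zero hz
  have hs : (ballScale c : ℂ) ≠ 0 := by exact_mod_cast (ballScale_pos hc).ne'
  have htangent : ⟪ballAut c z, fderiv ℂ (ballAut c) z v⟫ = (1 + ⟪c, z⟫)⁻¹ *
      (⟪c, v⟫ * (1 - ⟪ballAut c z, ballAut c z⟫)
        + (ballScale c : ℂ) ^ 2 * ⟪z, v⟫ / conj (1 + ⟪c, z⟫)) := by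
    rw [fderiv_ballAut_apply hc' hz, inner_smul_right, inner_sub_right, inner_smul_right,
      inner_ballAut_ballBoost hc' hz]
    ring
  rw [htangent, one_sub_inner_ballAut_self hc' hz]
  field_simp
  ring

theorem inner_fderiv_ballAut_self (hc : ‖c‖ ≤ 1) (hz : z ∈ ball (0 : E) 1) (v : E) :
    conj (1 + ⟪c, z⟫) * (1 + ⟪c, z⟫) * ⟪fderiv ℂ (ballAut c) z v, fderiv ℂ (ballAut c) z v⟫ =
      (ballScale c : ℂ) ^ 2 * (⟪v, v⟫ - ⟪v, c⟫ * ⟪z, v⟫ / conj (1 + ⟪c, z⟫)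
        - ⟪c, v⟫ * ⟪v, z⟫ / (1 + ⟪c, z⟫))
        - ⟪v, c⟫ * ⟪c, v⟫ * (1 - ⟪ballAut c z, ballAut c z⟫) := by
  have hden := one_add_inner_ne_zero hc hz
  have hden' := (map_ne_zero (starRingEnd ℂ)).2 hden
  have hLσ : ⟪ballBoost c v, ballAut c z⟫ =
      ⟪v, c⟫ + (ballScale c : ℂ) ^ 2 * ⟪v, z⟫ / (1 + ⟪c, z⟫) := by
    rw [← inner_conj_symm, inner_ballAut_ballBoost hc hz]
    simp
  rw [fderiv_ballAut_apply hc hz]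
  simp only [inner_smul_left, inner_smul_right, inner_sub_left, inner_sub_right, map_inv₀,
    inner_conj_symm, hLσ, inner_ballAut_ballBoost hc hz, inner_ballBoost_ballBoost hc]
  field_simp
  ring

theorem ofReal_bergmanNormSq (z v : E) :
    (bergmanNormSq z v : ℂ) = ⟪v, v⟫ / (1 - ⟪z, z⟫)
      + conj (⟪z, v⟫ / (1 - ⟪z, z⟫)) * (⟪z, v⟫ / (1 - ⟪z, z⟫)) := by
  rw [Complex.conj_mul', norm_div, ← ofReal_one_sub_norm_sq, inner_self_eq_norm_sq_to_K,
    Complex.norm_real, Real.norm_eq_abs, ← Complex.ofReal_pow, div_pow, sq_abs, bergmanNormSq]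
  push_cast
  rfl

theorem bergmanNormSq_ballAut (hc : c ∈ ball (0 : E) 1) (hz : z ∈ ball (0 : E) 1) (v : E) :
    bergmanNormSq (ballAut c z) (fderiv ℂ (ballAut c) z v) = bergmanNormSq z v := by
  have hc' := (mem_ball_zero_iff.1 hc).le
  have hden := one_add_inner_ne_zero hc' hz
  have hden' := (map_ne_zero (starRingEnd ℂ)).2 hden
  have hz' := one_sub_inner_self_ne_zero hz
  have hs : (ballScale c : ℂ) ≠ 0 := by exact_mod_cast (ballScale_pos hc).ne'
  have hTT := inner_fderiv_ballAut_self hc' hz v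
  rw [mul_comm, ← eq_div_iff (mul_ne_zero hden' hden)] at hTT
  apply Complex.ofReal_injective
  rw [ofReal_bergmanNormSq, ofReal_bergmanNormSq, inner_ballAut_fderiv_ballAut hc hz, hTT,
    one_sub_inner_ballAut_self hc' hz]
  simp only [map_add, map_div₀, map_sub, map_one, inner_conj_symm] at hden' ⊢
  field_simp
  ring

variable [FiniteDimensional ℂ E]

theorem isInvertible_fderiv_ballAut (hc : c ∈ ball (0 : E) 1) (hz : z ∈ ball (0 : E) 1) :
    (fderiv ℂ (ballAut c) z).IsInvertible := by
  have hinj : Function.Injective (fderiv ℂ (ballAut c) z).toLinearMap :=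
    (injective_iff_map_eq_zero _).2 fun v hv => by
      rw [← bergmanNormSq_eq_zero hz, ← bergmanNormSq_ballAut hc hz]
      exact (bergmanNormSq_eq_zero (mapsTo_ballAut hc hz)).2 hv
  exact ⟨(LinearEquiv.ofInjectiveEndo _ hinj).toContinuousLinearEquiv, by ext; rfl⟩

theorem isLocallyBiholomorphicOn_ballAut (hc : c ∈ ball (0 : E) 1) :
    IsLocallyBiholomorphicOn (ballAut c) (ball 0 1) where
  differentiableOn _ hz := (hasFDerivAt_fractionalLinear
    (one_add_inner_ne_zero (mem_ball_zero_iff.1 hc).le hz)).differentiableAt.differentiableWithinAt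
  isInvertible_fderiv _ := isInvertible_fderiv_ballAut hc

theorem preSchwarzian_ballAut (hc : c ∈ ball (0 : E) 1) (hz : z ∈ ball (0 : E) 1) :
    preSchwarzian (ballAut c) z = pureTrace (-(1 + ⟪c, z⟫)⁻¹ • innerSL ℂ c) :=
  preSchwarzian_fractionalLinear (one_add_inner_ne_zero (mem_ball_zero_iff.1 hc).le hz)
    (isInvertible_fderiv_ballAut hc hz)

theorem logJacobianForm_ballAut (hc : c ∈ ball (0 : E) 1) (hz : z ∈ ball (0 : E) 1) :
    logJacobianForm (ballAut c) z = -(1 + ⟪c, z⟫)⁻¹ • innerSL ℂ c := by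
  rw [logJacobianForm, preSchwarzian_ballAut hc hz, traceForm_pureTrace]

theorem schwarzian_ballAut (hc : c ∈ ball (0 : E) 1) (hz : z ∈ ball (0 : E) 1) :
    schwarzian (ballAut c) z = 0 := by
  rw [schwarzian, preSchwarzian_ballAut hc hz, traceFreePart_pureTrace]

end BallAutomorphism

section LinearMaps

variable {E E' G : Type*} [NormedAddCommGroup E] [NormedSpace ℂ E] [NormedAddCommGroup E']
  [NormedSpace ℂ E'] [NormedAddCommGroup G] [NormedSpace ℂ G] {F : E → G} {U : Set E}
  (T : E' ≃L[ℂ] E) {y : E'}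

theorem preSchwarzian_continuousLinearEquiv (y : E') : preSchwarzian T y = 0 := by
  have hT : fderiv ℂ T = fun _ => (T : E' →L[ℂ] E) := funext fun x => T.fderiv
  ext v w
  simp [preSchwarzian_apply, hT]

theorem isInvertible_fderiv_continuousLinearEquiv (y : E') : (fderiv ℂ T y).IsInvertible :=
  ⟨T, T.fderiv.symm⟩

namespace IsLocallyBiholomorphicOn

variable (hF : IsLocallyBiholomorphicOn F U)
include hF

theorem comp_continuousLinearEquiv (hU : IsOpen U) : IsLocallyBiholomorphicOn (F ∘ T) (T ⁻¹' U) :=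
  hF.comp
    ⟨T.differentiable.differentiableOn, fun y _ => isInvertible_fderiv_continuousLinearEquiv T y⟩
    hU (hU.preimage T.continuous) (Set.mapsTo_preimage T U)

variable [FiniteDimensional ℂ E] [CompleteSpace G]

theorem preSchwarzian_comp_continuousLinearEquiv (hU : IsOpen U) (hy : T y ∈ U) (v w : E') :
    T (preSchwarzian (F ∘ T) y v w) = preSchwarzian F (T y) (T v) (T w) := by
  have h := fderiv_preSchwarzian_comp (hF.contDiffAt hU hy 2) (hF.isInvertible_fderiv _ hy)
    T.contDiff.contDiffAt (isInvertible_fderiv_continuousLinearEquiv T y) v w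
  rw [preSchwarzian_continuousLinearEquiv, T.fderiv] at h
  simpa using h

variable [FiniteDimensional ℂ E']

theorem logJacobianForm_comp_continuousLinearEquiv (hU : IsOpen U) (hy : T y ∈ U) :
    logJacobianForm (F ∘ T) y = logJacobianForm F (T y) ∘L T := by
  ext v
  rw [logJacobianForm_comp (hF.contDiffAt hU hy 2) (hF.isInvertible_fderiv _ hy)
    T.contDiff.contDiffAt (isInvertible_fderiv_continuousLinearEquiv T y), T.fderiv,
    logJacobianForm, logJacobianForm, preSchwarzian_continuousLinearEquiv, map_zero]
  simp

theorem schwarzian_comp_continuousLinearEquiv (hU : IsOpen U) (hy : T y ∈ U) (v w : E') :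
    T (schwarzian (F ∘ T) y v w) = schwarzian F (T y) (T v) (T w) := by
  have h := fderiv_schwarzian_comp (hF.contDiffAt hU hy 2) (hF.isInvertible_fderiv _ hy)
    T.contDiff.contDiffAt (isInvertible_fderiv_continuousLinearEquiv T y) v w
  rw [schwarzian.eq_1 T, preSchwarzian_continuousLinearEquiv, map_zero, T.fderiv] at h
  simpa using h

end IsLocallyBiholomorphicOn

end LinearMaps

section SchwarzianBound

open Metric

local notation "⟪" x ", " y "⟫" => inner ℂ x y

variable {E G : Type*} [NormedAddCommGroup E] [InnerProductSpace ℂ E] {z v : E} {r β : ℝ}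

/-- The dilation by `r` multiplies squared Bergman lengths at `z` by a factor that lies between the
square of this number and this number itself. -/
def dilationFactor (r : ℝ) (z : E) : ℝ := r ^ 2 * (1 - ‖z‖ ^ 2) / (1 - r ^ 2 * ‖z‖ ^ 2)

theorem bergmanNormSq_smul_smul (r : ℝ) (z v : E) :
    bergmanNormSq ((r : ℂ) • z) ((r : ℂ) • v) = r ^ 2 * ‖v‖ ^ 2 / (1 - r ^ 2 * ‖z‖ ^ 2)
      + r ^ 4 * ‖⟪z, v⟫‖ ^ 2 / (1 - r ^ 2 * ‖z‖ ^ 2) ^ 2 := by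
  simp only [bergmanNormSq, norm_smul, inner_smul_left, inner_smul_right, norm_mul,
    RCLike.norm_conj, Complex.norm_real, Real.norm_eq_abs, mul_pow, sq_abs]
  ring

theorem bergmanNormSq_smul_smul_le (hr : r ^ 2 ≤ 1) (hz : z ∈ ball (0 : E) 1) (v : E) :
    bergmanNormSq ((r : ℂ) • z) ((r : ℂ) • v) ≤ dilationFactor r z * bergmanNormSq z v := by
  have hP := one_sub_norm_sq_pos hz
  have hP' := one_sub_mul_norm_sq_pos hr hz
  have hdiff : dilationFactor r z * bergmanNormSq z v - bergmanNormSq ((r : ℂ) • z) ((r : ℂ) • v) =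
      r ^ 2 * ‖⟪z, v⟫‖ ^ 2 * (1 - r ^ 2) / ((1 - ‖z‖ ^ 2) * (1 - r ^ 2 * ‖z‖ ^ 2) ^ 2) := by
    rw [bergmanNormSq_smul_smul, dilationFactor, bergmanNormSq]
    field_simp
    ring
  have := sub_nonneg.2 hr
  exact sub_nonneg.1 (hdiff ▸ by positivity)

theorem dilationFactor_sq_mul_bergmanNormSq_le (hr : r ^ 2 ≤ 1) (hz : z ∈ ball (0 : E) 1) (v : E) :
    dilationFactor r z ^ 2 * bergmanNormSq z v ≤ bergmanNormSq ((r : ℂ) • z) ((r : ℂ) • v) := by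
  have hP := one_sub_norm_sq_pos hz
  have hP' := one_sub_mul_norm_sq_pos hr hz
  have hdiff :
      bergmanNormSq ((r : ℂ) • z) ((r : ℂ) • v) - dilationFactor r z ^ 2 * bergmanNormSq z v =
        r ^ 2 * ‖v‖ ^ 2 * (1 - r ^ 2) / (1 - r ^ 2 * ‖z‖ ^ 2) ^ 2 := by
    rw [bergmanNormSq_smul_smul, dilationFactor, bergmanNormSq]
    field_simp
    ring
  have := sub_nonneg.2 hr
  exact sub_nonneg.1 (hdiff ▸ by positivity)

variable [FiniteDimensional ℂ E] [NormedAddCommGroup G] [NormedSpace ℂ G] {F : E → G}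

/-- The locally biholomorphic maps on the unit ball whose Schwarzian derivative has norm at most
`β` in the metric `bergmanNormSq`. In dimension `n` the Bergman metric is larger by the factor
`√(n + 1)`, so `β = √(n + 1) α` corresponds to the bound `α` in the Bergman metric. -/
structure HasSchwarzianBound (F : E → G) (β : ℝ) : Prop
    extends IsLocallyBiholomorphicOn F (ball 0 1) where
  bergmanNormSq_le : ∀ z ∈ ball (0 : E) 1, ∀ v,
    bergmanNormSq z (schwarzian F z v v) ≤ β ^ 2 * bergmanNormSq z v ^ 2

namespace HasSchwarzianBound

variable [CompleteSpace G]

theorem comp_smul (hF : HasSchwarzianBound F β) (hr : r ≠ 0) (hr' : r ^ 2 ≤ 1) :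
    HasSchwarzianBound (fun z => F ((r : ℂ) • z)) β := by
  let T : E ≃L[ℂ] E := .smulLeft (Units.mk0 (r : ℂ) (by exact_mod_cast hr))
  have hT : ∀ z ∈ ball (0 : E) 1, T z ∈ ball (0 : E) 1 := by
    intro z hz
    change (r : ℂ) • z ∈ ball (0 : E) 1
    rw [mem_ball_zero_iff, norm_smul, Complex.norm_real, Real.norm_eq_abs]
    exact mul_lt_one_of_nonneg_of_lt_one_right (sq_le_one_iff_abs_le_one _ |>.1 hr')
      (norm_nonneg z) (mem_ball_zero_iff.1 hz)
  refine ⟨(hF.comp_continuousLinearEquiv T isOpen_ball).mono hT, fun z hz v => ?_⟩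
  have hκ : 0 < dilationFactor r z :=
    div_pos (mul_pos (sq_pos_of_ne_zero hr) (one_sub_norm_sq_pos hz))
      (one_sub_mul_norm_sq_pos hr' hz)
  refine le_of_mul_le_mul_left ?_ (pow_pos hκ 2)
  calc dilationFactor r z ^ 2 * bergmanNormSq z (schwarzian (F ∘ T) z v v)
      ≤ bergmanNormSq (T z) (T (schwarzian (F ∘ T) z v v)) :=
        dilationFactor_sq_mul_bergmanNormSq_le hr' hz _
    _ = bergmanNormSq (T z) (schwarzian F (T z) (T v) (T v)) := by
        rw [hF.schwarzian_comp_continuousLinearEquiv T isOpen_ball (hT z hz)]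
    _ ≤ β ^ 2 * bergmanNormSq (T z) (T v) ^ 2 := hF.bergmanNormSq_le _ (hT z hz) _
    _ ≤ β ^ 2 * (dilationFactor r z * bergmanNormSq z v) ^ 2 := by
        gcongr
        · exact bergmanNormSq_nonneg (hT z hz) _
        · exact bergmanNormSq_smul_smul_le hr' hz v
    _ = dilationFactor r z ^ 2 * (β ^ 2 * bergmanNormSq z v ^ 2) := by ring

theorem comp_ballAut (hF : HasSchwarzianBound F β) {c : E} (hc : c ∈ ball (0 : E) 1) :
    HasSchwarzianBound (F ∘ ballAut c) β where
  toIsLocallyBiholomorphicOn := hF.comp (isLocallyBiholomorphicOn_ballAut hc) isOpen_ball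
    isOpen_ball (mapsTo_ballAut hc)
  bergmanNormSq_le z hz v := by
    have hσ := isLocallyBiholomorphicOn_ballAut hc
    have hσz := mapsTo_ballAut hc hz
    rw [← bergmanNormSq_ballAut hc hz, ← bergmanNormSq_ballAut hc hz v,
      fderiv_schwarzian_comp (hF.contDiffAt isOpen_ball hσz 2) (hF.isInvertible_fderiv _ hσz)
        (hσ.contDiffAt isOpen_ball hz 2) (hσ.isInvertible_fderiv z hz),
      schwarzian_ballAut hc hz]
    simpa using hF.bergmanNormSq_le _ hσz (fderiv ℂ (ballAut c) z v)

end HasSchwarzianBound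

end SchwarzianBound

section NormBounds

open Module

variable {𝕜 E G : Type*} [RCLike 𝕜] [NormedAddCommGroup E] [InnerProductSpace 𝕜 E]
  [NormedAddCommGroup G] [NormedSpace 𝕜 G]

-- Polarization and the parallelogram identity.
theorem opNorm_le_of_norm_apply_self_le {B : E →L[𝕜] E →L[𝕜] G} {β : ℝ}
    (hsymm : ∀ v w, B v w = B w v) (hβ : 0 ≤ β) (h : ∀ v, ‖B v v‖ ≤ β * ‖v‖ ^ 2) : ‖B‖ ≤ β := by
  let := InnerProductSpace.rclikeToReal 𝕜 E
  let := NormedSpace.restrictScalars ℝ 𝕜 G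
  refine B.opNorm_le_of_unit_norm hβ fun v hv => (B v).opNorm_le_of_unit_norm hβ fun w hw => ?_
  have hpolar : (4 : 𝕜) • B v w = B (v + w) (v + w) - B (v - w) (v - w) := by
    simp only [map_add, map_sub, add_apply, sub_apply, hsymm w v]
    module
  have hpar := parallelogram_law_with_norm 𝕜 v w
  have hfour : 4 * ‖B v w‖ = ‖B (v + w) (v + w) - B (v - w) (v - w)‖ := by
    rw [← hpolar, norm_smul, RCLike.norm_ofNat]
  rw [hv, hw] at hpar
  nlinarith [norm_sub_le (B (v + w) (v + w)) (B (v - w) (v - w)), h (v + w), h (v - w)]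

theorem exists_norm_eq_one_apply_eq_norm [CompleteSpace E] [Nontrivial E] (a : E →L[𝕜] 𝕜) :
    ∃ e : E, ‖e‖ = 1 ∧ a e = ‖a‖ := by
  let := InnerProductSpace.rclikeToReal 𝕜 E
  obtain ⟨w, rfl⟩ := (InnerProductSpace.toDual 𝕜 E).surjective a
  obtain rfl | hw := eq_or_ne w 0
  · obtain ⟨e, he⟩ := exists_norm_eq (E := E) zero_le_one
    exact ⟨e, he, by simp⟩
  · have hw' : (‖w‖ : 𝕜) ≠ 0 := by exact_mod_cast norm_ne_zero_iff.2 hw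
    refine ⟨(‖w‖ : 𝕜)⁻¹ • w, norm_smul_inv_norm hw, ?_⟩
    rw [map_smul, InnerProductSpace.toDual_apply_apply, inner_self_eq_norm_sq_to_K,
      LinearIsometryEquiv.norm_map, smul_eq_mul, sq, inv_mul_cancel_left₀ hw']

variable [FiniteDimensional 𝕜 E]

theorem norm_traceCLM_le (A : E →L[𝕜] E) : ‖traceCLM 𝕜 E A‖ ≤ finrank 𝕜 E * ‖A‖ := by
  let b := stdOrthonormalBasis 𝕜 E
  calc ‖traceCLM 𝕜 E A‖ = ‖∑ i, inner 𝕜 (b i) (A (b i))‖ :=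
        congrArg norm (LinearMap.trace_eq_sum_inner A.toLinearMap b)
    _ ≤ ∑ i, ‖inner 𝕜 (b i) (A (b i))‖ := norm_sum_le _ _
    _ ≤ ∑ _i, ‖A‖ := Finset.sum_le_sum fun i _ => by
        simpa using (norm_inner_le_norm (b i) (A (b i))).trans
          (mul_le_mul_of_nonneg_left (A.le_opNorm (b i)) (norm_nonneg _))
    _ = finrank 𝕜 E * ‖A‖ := by simp

end NormBounds

section SchwarzianEstimates

open Metric Module

variable {E G : Type*} [NormedAddCommGroup E] [InnerProductSpace ℂ E]

namespace HasSchwarzianBound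

variable [FiniteDimensional ℂ E] [NormedAddCommGroup G] [NormedSpace ℂ G] {F : E → G} {β : ℝ}
  (hF : HasSchwarzianBound F β)
include hF

theorem mul_norm_schwarzian_apply_self_sq_le {z : E} (hz : z ∈ ball (0 : E) 1) (v : E) :
    (1 - ‖z‖ ^ 2) ^ 3 * ‖schwarzian F z v v‖ ^ 2 ≤ (β * ‖v‖ ^ 2) ^ 2 := by
  have hz' := one_sub_norm_sq_pos hz
  calc (1 - ‖z‖ ^ 2) ^ 3 * ‖schwarzian F z v v‖ ^ 2
      ≤ (1 - ‖z‖ ^ 2) ^ 3 * ((1 - ‖z‖ ^ 2) * bergmanNormSq z (schwarzian F z v v)) := by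
        gcongr
        exact norm_sq_le_mul_bergmanNormSq hz _
    _ ≤ (1 - ‖z‖ ^ 2) ^ 3 * ((1 - ‖z‖ ^ 2) * (β ^ 2 * ((‖v‖ / (1 - ‖z‖ ^ 2)) ^ 2) ^ 2)) := by
        gcongr
        refine (hF.bergmanNormSq_le z hz v).trans ?_
        gcongr
        · exact bergmanNormSq_nonneg hz v
        · exact bergmanNormSq_le_div_sq hz v
    _ = (β * ‖v‖ ^ 2) ^ 2 := by field_simp

variable (hβ : 0 ≤ β)
include hβ

theorem norm_schwarzian_zero_apply_self_le (v : E) : ‖schwarzian F 0 v v‖ ≤ β * ‖v‖ ^ 2 := by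
  refine (sq_le_sq₀ (norm_nonneg _) (by positivity)).1 ?_
  simpa using hF.mul_norm_schwarzian_apply_self_sq_le (mem_ball_self one_pos) v

theorem norm_schwarzian_apply_self_le_of_norm_le_half {z : E} (hz : ‖z‖ ≤ 1 / 2) (v : E) :
    ‖schwarzian F z v v‖ ≤ 2 * β * ‖v‖ ^ 2 := by
  refine (sq_le_sq₀ (norm_nonneg _) (by positivity)).1 ?_
  have hball : z ∈ ball (0 : E) 1 := mem_ball_zero_iff.2 (by linarith)
  have hz' : 3 / 4 ≤ 1 - ‖z‖ ^ 2 := by nlinarith [norm_nonneg z]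
  have hcube : 1 / 4 ≤ (1 - ‖z‖ ^ 2) ^ 3 :=
    le_trans (by norm_num) (pow_le_pow_left₀ (by norm_num) hz' 3)
  nlinarith [hF.mul_norm_schwarzian_apply_self_sq_le hball v, sq_nonneg ‖schwarzian F z v v‖]

variable [CompleteSpace G]

theorem norm_schwarzian_zero_le : ‖schwarzian F 0‖ ≤ β :=
  opNorm_le_of_norm_apply_self_le
    (schwarzian_symm (hF.contDiffAt isOpen_ball (mem_ball_self one_pos) 2)) hβ
    (hF.norm_schwarzian_zero_apply_self_le hβ)

theorem norm_fderiv_schwarzian_zero_apply_self_le (v : E) :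
    ‖((fderiv ℂ (schwarzian F) 0).flip v).flip v‖ ≤ 4 * β * ‖v‖ ^ 2 := by
  have hdiff : ∀ z ∈ closedBall (0 : E) (1 / 2),
      HasFDerivAt (schwarzian F · v v) (((fderiv ℂ (schwarzian F) z).flip v).flip v) z := by
    intro z hz
    have hball : z ∈ ball (0 : E) 1 := closedBall_subset_ball (by norm_num) hz
    exact (((hF.differentiableAt_schwarzian isOpen_ball hball).hasFDerivAt.clm_apply
      (hasFDerivAt_const v z)).clm_apply (hasFDerivAt_const v z)).congr_fderiv (by ext; simp)
  have hcauchy := norm_fderiv_le_of_forall_mem_closedBall_norm_le one_half_pos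
    (fun z hz => (hdiff z hz).differentiableAt) fun z hz =>
      hF.norm_schwarzian_apply_self_le_of_norm_le_half hβ (mem_closedBall_zero_iff.1 hz) v
  rw [(hdiff 0 (mem_closedBall_self one_half_pos.le)).fderiv] at hcauchy
  linarith

end HasSchwarzianBound

end SchwarzianEstimates

section InvariantForm

open Metric Module

local notation "⟪" x ", " y "⟫" => inner ℂ x y

variable {E G : Type*} [NormedAddCommGroup E] [InnerProductSpace ℂ E] [FiniteDimensional ℂ E]
  [NormedAddCommGroup G] [NormedSpace ℂ G] {F : E → G} {c z : E} {A β : ℝ}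

/-- The `1`-form `(n + 1)⁻¹ (∂ log det DF - ∂ log K)`, where `K(z) = (1 - |z|²)^(-(n + 1))` is the
Bergman kernel up to a constant. It is natural under automorphisms of the ball, and at the origin
it is `logJacobianForm F 0`. -/
def invariantForm (F : E → G) (z : E) : E →L[ℂ] ℂ :=
  logJacobianForm F z - (1 - ⟪z, z⟫)⁻¹ • innerSL ℂ z

theorem invariantForm_zero (F : E → G) : invariantForm F 0 = logJacobianForm F 0 := by
  simp [invariantForm]

theorem invariantForm_apply (F : E → G) (z v : E) :
    invariantForm F z v = logJacobianForm F z v - ⟪z, v⟫ / (1 - ⟪z, z⟫) := by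
  rw [div_eq_inv_mul]
  rfl

/-- The form `invariantForm (F ∘ ballAut c) 0`, written so that it makes sense for all `c` in the
domain of `F`, in particular on the unit sphere. -/
def transportedForm (F : E → G) (c : E) : E →L[ℂ] ℂ :=
  logJacobianForm F c ∘L (ballBoost c - (innerSL ℂ c).smulRight c) - innerSL ℂ c

theorem transportedForm_zero (F : E → G) : transportedForm F 0 = logJacobianForm F 0 := by
  ext v
  simp [transportedForm, ballBoost_apply, ballScale]

theorem transportedForm_of_norm_eq_one (F : E → G) (hc : ‖c‖ = 1) :
    transportedForm F c = -innerSL ℂ c := by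
  have hboost : ballBoost c = (innerSL ℂ c).smulRight c := by
    ext v
    simp [ballBoost_apply, ballScale, hc]
  rw [transportedForm, hboost, sub_self, ContinuousLinearMap.comp_zero, zero_sub]

theorem continuousOn_transportedForm {s : Set E} (hF : ContinuousOn (logJacobianForm F) s) :
    ContinuousOn (transportedForm F) s := by
  have hsmul : Continuous fun c : E => (innerSL ℂ c).smulRight c :=
    ((ContinuousLinearMap.smulRightL ℂ E E).continuous.comp (innerSL ℂ).continuous).clm_apply
      continuous_id
  exact (hF.clm_comp (continuous_ballBoost.sub hsmul).continuousOn).sub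
    (innerSL ℂ).continuous.continuousOn

variable [CompleteSpace G]

theorem IsLocallyBiholomorphicOn.logJacobianForm_comp_ballAut
    (hF : IsLocallyBiholomorphicOn F (ball 0 1)) (hc : c ∈ ball (0 : E) 1)
    (hz : z ∈ ball (0 : E) 1) (v : E) :
    logJacobianForm (F ∘ ballAut c) z v =
      logJacobianForm F (ballAut c z) (fderiv ℂ (ballAut c) z v) - ⟪c, v⟫ / (1 + ⟪c, z⟫) := by
  have hσ := isLocallyBiholomorphicOn_ballAut hc
  have hσz := mapsTo_ballAut hc hz
  rw [logJacobianForm_comp (hF.contDiffAt isOpen_ball hσz 2) (hF.isInvertible_fderiv _ hσz)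
    (hσ.contDiffAt isOpen_ball hz 2) (hσ.isInvertible_fderiv z hz), logJacobianForm_ballAut hc hz]
  simp only [smul_apply, innerSL_apply_apply, smul_eq_mul]
  ring

theorem IsLocallyBiholomorphicOn.invariantForm_comp_ballAut
    (hF : IsLocallyBiholomorphicOn F (ball 0 1)) (hc : c ∈ ball (0 : E) 1)
    (hz : z ∈ ball (0 : E) 1) (v : E) :
    invariantForm (F ∘ ballAut c) z v =
      invariantForm F (ballAut c z) (fderiv ℂ (ballAut c) z v) := by
  rw [invariantForm_apply, invariantForm_apply, hF.logJacobianForm_comp_ballAut hc hz,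
    inner_ballAut_fderiv_ballAut hc hz]
  ring

theorem IsLocallyBiholomorphicOn.logJacobianForm_comp_ballAut_zero
    (hF : IsLocallyBiholomorphicOn F (ball 0 1)) (hc : c ∈ ball (0 : E) 1) :
    logJacobianForm (F ∘ ballAut c) 0 = transportedForm F c := by
  ext v
  rw [hF.logJacobianForm_comp_ballAut hc (mem_ball_self one_pos), ballAut_zero,
    fderiv_ballAut_zero (mem_ball_zero_iff.1 hc).le]
  simp [transportedForm]

-- Every tangent vector at `z` is the image under `ballAut z` of a vector at the origin.
theorem IsLocallyBiholomorphicOn.norm_invariantForm_apply_sq_le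
    (hF : IsLocallyBiholomorphicOn F (ball 0 1))
    (hA : ∀ c ∈ ball (0 : E) 1, ‖transportedForm F c‖ ≤ A) (hz : z ∈ ball (0 : E) 1) (v : E) :
    ‖invariantForm F z v‖ ^ 2 ≤ A ^ 2 * bergmanNormSq z v := by
  have h0 : (0 : E) ∈ ball (0 : E) 1 := mem_ball_self one_pos
  obtain ⟨T, hT⟩ := isInvertible_fderiv_ballAut hz h0
  obtain ⟨u, rfl⟩ := T.surjective v
  have htransport : invariantForm F z (T u) = transportedForm F z u := by
    rw [← hF.logJacobianForm_comp_ballAut_zero hz, ← invariantForm_zero,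
      hF.invariantForm_comp_ballAut hz h0, ballAut_zero, ← hT]
    rfl
  have hnorm : bergmanNormSq z (T u) = ‖u‖ ^ 2 := by
    rw [← bergmanNormSq_zero_left, ← bergmanNormSq_ballAut hz h0, ballAut_zero, ← hT]
    rfl
  rw [htransport, hnorm, ← mul_pow]
  exact pow_le_pow_left₀ (norm_nonneg _) ((transportedForm F z).le_of_opNorm_le (hA z hz) u) 2

end InvariantForm

section MaximumPrinciple

open Metric Module Filter Set Topology

variable {E G : Type*} [NormedAddCommGroup E] [InnerProductSpace ℂ E] {e : E} {β : ℝ}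

theorem bergmanNormSq_ofReal_smul_self {t : ℝ} (ht : t ^ 2 < 1) (he : ‖e‖ = 1) :
    bergmanNormSq ((t : ℂ) • e) e = ((1 - t ^ 2)⁻¹) ^ 2 := by
  have ht' := sub_pos.2 ht
  have hnorm : ‖(t : ℂ)‖ ^ 2 = t ^ 2 := by rw [Complex.norm_real, Real.norm_eq_abs, sq_abs]
  have hinner : ‖inner ℂ ((t : ℂ) • e) e‖ = ‖(t : ℂ)‖ := by
    rw [inner_smul_left, inner_self_eq_norm_sq_to_K, he]
    simp
  rw [bergmanNormSq, hinner, norm_smul, he, mul_one, one_pow, hnorm]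
  field_simp
  ring

variable [FiniteDimensional ℂ E] [NormedAddCommGroup G] [NormedSpace ℂ G] {F : E → G}

theorem one_sub_sq_mul_invariantForm_ofReal_smul_self {t : ℝ} (ht : t ^ 2 < 1) (he : ‖e‖ = 1) :
    (1 - t ^ 2 : ℂ) * invariantForm F ((t : ℂ) • e) e =
      (1 - t ^ 2) * logJacobianForm F ((t : ℂ) • e) e - t := by
  have ht' : (1 - t ^ 2 : ℂ) ≠ 0 := by exact_mod_cast (sub_pos.2 ht).ne'
  have hee : inner ℂ e e = 1 := by simp [inner_self_eq_norm_sq_to_K, he]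
  rw [invariantForm_apply, inner_smul_left, inner_smul_left, inner_smul_right, hee,
    Complex.conj_ofReal, mul_one, ← sq]
  field_simp

theorem norm_one_sub_sq_mul_logJacobianForm_sub_le {A t : ℝ} (hA : 0 ≤ A) (ht : t ^ 2 < 1)
    (he : ‖e‖ = 1) (h : ‖invariantForm F ((t : ℂ) • e) e‖ ^ 2 ≤
      A ^ 2 * bergmanNormSq ((t : ℂ) • e) e) :
    ‖(1 - t ^ 2) * logJacobianForm F ((t : ℂ) • e) e - t‖ ≤ A := by
  have ht' := sub_pos.2 ht
  rw [bergmanNormSq_ofReal_smul_self ht he, ← mul_pow,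
    sq_le_sq₀ (norm_nonneg _) (by positivity), ← div_eq_mul_inv, le_div_iff₀' ht'] at h
  rw [← one_sub_sq_mul_invariantForm_ofReal_smul_self ht he, norm_mul]
  have hnorm : ‖(1 - t ^ 2 : ℂ)‖ = 1 - t ^ 2 := by
    exact_mod_cast Complex.norm_of_nonneg ht'.le
  rwa [hnorm]

variable [CompleteSpace G]

theorem IsLocallyBiholomorphicOn.hasDerivAt_one_sub_sq_mul_logJacobianForm_sub
    (hF : IsLocallyBiholomorphicOn F (ball 0 1)) (e : E) :
    HasDerivAt (fun t : ℂ => (1 - t ^ 2) * logJacobianForm F (t • e) e - t)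
      (fderiv ℂ (logJacobianForm F) 0 e e - 1) 0 := by
  have hline : HasDerivAt (fun t : ℂ => t • e) e 0 := by
    simpa using (hasDerivAt_id (0 : ℂ)).smul_const e
  have ha : HasFDerivAt (logJacobianForm F) (fderiv ℂ (logJacobianForm F) 0) ((0 : ℂ) • e) := by
    rw [zero_smul]
    exact (hF.differentiableAt_logJacobianForm isOpen_ball (mem_ball_self one_pos)).hasFDerivAt
  have hcomp := ha.comp_hasDerivAt 0 hline
  have hae : HasDerivAt (fun t : ℂ => logJacobianForm F (t • e) e)
      (fderiv ℂ (logJacobianForm F) 0 e e) 0 :=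
    ((ContinuousLinearMap.apply ℂ ℂ e).hasFDerivAt).comp_hasDerivAt 0 hcomp
  have hsq : HasDerivAt (fun t : ℂ => 1 - t ^ 2) 0 0 := by
    simpa using (hasDerivAt_pow 2 (0 : ℂ)).const_sub 1
  exact ((hsq.fun_mul hae).fun_sub (hasDerivAt_id' 0)).congr_deriv (by simp)

-- `Re ((1 - t²) a(t e) e - t)` has a local maximum at `t = 0`.
theorem IsLocallyBiholomorphicOn.re_fderiv_logJacobianForm_zero_eq_one
    (hF : IsLocallyBiholomorphicOn F (ball 0 1))
    (hmax : ∀ z ∈ ball (0 : E) 1, ∀ v,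
      ‖invariantForm F z v‖ ^ 2 ≤ ‖logJacobianForm F 0‖ ^ 2 * bergmanNormSq z v)
    (he : ‖e‖ = 1) (hae : logJacobianForm F 0 e = ‖logJacobianForm F 0‖) :
    (fderiv ℂ (logJacobianForm F) 0 e e).re = 1 := by
  have hlocal : IsLocalMax
      (fun t : ℝ => ((1 - (t : ℂ) ^ 2) * logJacobianForm F ((t : ℂ) • e) e - t).re) 0 := by
    filter_upwards [Ioo_mem_nhds neg_one_lt_zero one_pos] with t ht
    have ht' : t ^ 2 < 1 := (sq_lt_one_iff_abs_lt_one t).2 (abs_lt.2 ht)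
    have hball : (t : ℂ) • e ∈ ball (0 : E) 1 := by
      simpa [norm_smul, he] using abs_lt.2 ht
    simpa [hae] using (Complex.re_le_norm _).trans
      (norm_one_sub_sq_mul_logJacobianForm_sub_le (norm_nonneg _) ht' he (hmax _ hball e))
  have hderiv := hF.hasDerivAt_one_sub_sq_mul_logJacobianForm_sub e
  rw [← Complex.ofReal_zero] at hderiv
  have hzero := hlocal.hasDerivAt_eq_zero hderiv.real_of_complex
  rwa [Complex.sub_re, Complex.one_re, sub_eq_zero] at hzero

theorem HasSchwarzianBound.norm_traceCLM_schwarzian_zero_comp_self_le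
    (hF : HasSchwarzianBound F β) (hβ : 0 ≤ β) (v : E) :
    ‖traceCLM ℂ E (schwarzian F 0 v ∘L schwarzian F 0 v)‖ ≤ finrank ℂ E * (β * ‖v‖) ^ 2 := by
  have hv := (schwarzian F 0).le_of_opNorm_le (hF.norm_schwarzian_zero_le hβ) v
  rw [sq]
  exact (norm_traceCLM_le _).trans (mul_le_mul_of_nonneg_left
    (((schwarzian F 0 v).opNorm_comp_le _).trans (by gcongr)) (Nat.cast_nonneg _))

theorem HasSchwarzianBound.norm_traceCLM_fderiv_schwarzian_zero_le
    (hF : HasSchwarzianBound F β) (hβ : 0 ≤ β) (v : E) :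
    ‖traceCLM ℂ E (((fderiv ℂ (schwarzian F) 0).flip v).flip v)‖ ≤
      finrank ℂ E * (4 * β * ‖v‖ ^ 2) :=
  (norm_traceCLM_le _).trans (mul_le_mul_of_nonneg_left
    (hF.norm_fderiv_schwarzian_zero_apply_self_le hβ v) (Nat.cast_nonneg _))

theorem HasSchwarzianBound.sub_one_mul_norm_logJacobianForm_zero_sq_le [Nontrivial E]
    (hF : HasSchwarzianBound F β) (hβ : 0 ≤ β)
    (hmax : ∀ z ∈ ball (0 : E) 1, ∀ v,
      ‖invariantForm F z v‖ ^ 2 ≤ ‖logJacobianForm F 0‖ ^ 2 * bergmanNormSq z v) :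
    (finrank ℂ E - 1) * ‖logJacobianForm F 0‖ ^ 2 ≤
      (finrank ℂ E - 1) * (1 + β * ‖logJacobianForm F 0‖)
        + (4 * finrank ℂ E * β + finrank ℂ E * β ^ 2) := by
  obtain ⟨e, he, hae⟩ : ∃ e : E, ‖e‖ = 1 ∧ logJacobianForm F 0 e = (‖logJacobianForm F 0‖ : ℂ) :=
    exists_norm_eq_one_apply_eq_norm (logJacobianForm F 0)
  have hdim : (0 : ℝ) ≤ finrank ℂ E - 1 := sub_nonneg.2 (by exact_mod_cast finrank_pos (R := ℂ))
  have hquad : ‖traceCLM ℂ E (schwarzian F 0 e ∘L schwarzian F 0 e)‖ ≤ finrank ℂ E * β ^ 2 := by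
    simpa [he] using hF.norm_traceCLM_schwarzian_zero_comp_self_le hβ e
  have hdiv : ‖traceCLM ℂ E (((fderiv ℂ (schwarzian F) 0).flip e).flip e)‖ ≤
      finrank ℂ E * (4 * β) := by
    simpa [he] using hF.norm_traceCLM_fderiv_schwarzian_zero_le hβ e
  have hlin : ‖logJacobianForm F 0 (schwarzian F 0 e e)‖ ≤ ‖logJacobianForm F 0‖ * β :=
    (logJacobianForm F 0).le_opNorm_of_le (by
      simpa [he] using hF.norm_schwarzian_zero_apply_self_le hβ e)
  have hid := congrArg Complex.re
    (hF.fderiv_logJacobianForm_apply_self isOpen_ball (mem_ball_self one_pos) e)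
  have hcast : (finrank ℂ E - 1 : ℂ) = ((finrank ℂ E - 1 : ℝ) : ℂ) := by push_cast; rfl
  rw [hae, hcast, ← Complex.ofReal_pow] at hid
  simp only [Complex.sub_re, Complex.add_re, Complex.re_ofReal_mul, Complex.ofReal_re,
    hF.re_fderiv_logJacobianForm_zero_eq_one hmax he hae] at hid
  have hre (w : ℂ) {b : ℝ} (hw : ‖w‖ ≤ b) : |w.re| ≤ b := (Complex.abs_re_le_norm w).trans hw
  have hlin' := mul_le_mul_of_nonneg_left (abs_le.1 (hre _ hlin)).1 hdim
  linarith [(abs_le.1 (hre _ hquad)).2, (abs_le.1 (hre _ hdiv)).1]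

/-- The bound for `logJacobianForm F 0` in dimension `n` when `‖SF‖ ≤ β` in the metric
`bergmanNormSq`: the positive root of
`(n - 1) A² = (n - 1) (1 + β A) + 4 n β + n β²`. -/
def orderBound (n : ℕ) (β : ℝ) : ℝ :=
  β / 2 + √(1 + β ^ 2 / 4 + (4 * n * β + n * β ^ 2) / (n - 1))

theorem one_le_orderBound {n : ℕ} (hn : 1 < n) (hβ : 0 ≤ β) : 1 ≤ orderBound n β := by
  have hn' : (0 : ℝ) < n - 1 := sub_pos.2 (by exact_mod_cast hn)
  have hsqrt : 1 ≤ √(1 + β ^ 2 / 4 + (4 * n * β + n * β ^ 2) / (n - 1)) :=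
    Real.one_le_sqrt.2 (by rw [add_assoc]; exact le_add_of_nonneg_right (by positivity))
  exact hsqrt.trans (le_add_of_nonneg_left (by positivity))

theorem le_orderBound {n : ℕ} {A : ℝ} (hn : 1 < n)
    (h : (n - 1) * A ^ 2 ≤ (n - 1) * (1 + β * A) + (4 * n * β + n * β ^ 2)) :
    A ≤ orderBound n β := by
  have hn' : (0 : ℝ) < n - 1 := sub_pos.2 (by exact_mod_cast hn)
  rw [← mul_div_cancel₀ (4 * n * β + n * β ^ 2) hn'.ne', ← mul_add] at h
  have hquad := le_of_mul_le_mul_left h hn'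
  exact sub_le_iff_le_add'.1 (Real.le_sqrt_of_sq_le (by linarith))

theorem IsLocallyBiholomorphicOn.logJacobianForm_comp_smul {U : Set E} {r : ℝ} {z : E}
    (hF : IsLocallyBiholomorphicOn F U) (hU : IsOpen U) (hr : r ≠ 0) (hz : (r : ℂ) • z ∈ U) :
    logJacobianForm (fun w => F ((r : ℂ) • w)) z = (r : ℂ) • logJacobianForm F ((r : ℂ) • z) := by
  have hr' : (r : ℂ) ≠ 0 := Complex.ofReal_ne_zero.2 hr
  refine (hF.logJacobianForm_comp_continuousLinearEquiv
    (ContinuousLinearEquiv.smulLeft (Units.mk0 (r : ℂ) hr')) hU hz).trans ?_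
  ext v
  exact map_smul (logJacobianForm F ((r : ℂ) • z)) (r : ℂ) v

namespace HasSchwarzianBound

theorem norm_logJacobianForm_zero_le_of_continuousOn (hE : 1 < finrank ℂ E)
    (hF : HasSchwarzianBound F β) (hβ : 0 ≤ β)
    (hcont : ContinuousOn (logJacobianForm F) (closedBall 0 1)) :
    ‖logJacobianForm F 0‖ ≤ orderBound (finrank ℂ E) β := by
  have : ProperSpace E := FiniteDimensional.proper ℂ E
  have : Nontrivial E := nontrivial_of_finrank_pos (R := ℂ) (zero_lt_one.trans hE)
  obtain ⟨c, hc, hmax⟩ := (isCompact_closedBall (0 : E) 1).exists_isMaxOn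
    (nonempty_closedBall.2 zero_le_one) (continuousOn_transportedForm hcont).norm
  rw [← transportedForm_zero]
  refine (hmax (mem_closedBall_self zero_le_one)).trans ?_
  rw [mem_closedBall_zero_iff] at hc
  obtain hc | hc := hc.lt_or_eq
  · have hcball : c ∈ ball (0 : E) 1 := mem_ball_zero_iff.2 hc
    refine le_orderBound hE ?_
    change _ * ‖transportedForm F c‖ ^ 2 ≤ _ * (_ + _ * ‖transportedForm F c‖) + _
    rw [← hF.logJacobianForm_comp_ballAut_zero hcball]
    refine (hF.comp_ballAut hcball).sub_one_mul_norm_logJacobianForm_zero_sq_le hβ fun z hz v => ?_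
    rw [hF.invariantForm_comp_ballAut hcball hz, ← bergmanNormSq_ballAut hcball hz,
      hF.logJacobianForm_comp_ballAut_zero hcball]
    exact hF.norm_invariantForm_apply_sq_le (fun d hd => hmax (ball_subset_closedBall hd))
      (mapsTo_ballAut hcball hz) _
  · simpa [transportedForm_of_norm_eq_one F hc, hc] using one_le_orderBound hE hβ

theorem norm_logJacobianForm_zero_le (hE : 1 < finrank ℂ E) (hF : HasSchwarzianBound F β)
    (hβ : 0 ≤ β) : ‖logJacobianForm F 0‖ ≤ orderBound (finrank ℂ E) β := by
  have hdilate : ∀ r ∈ Ioo (0 : ℝ) 1,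
      r * ‖logJacobianForm F 0‖ ≤ orderBound (finrank ℂ E) β := fun r ⟨hr, hr'⟩ => by
    have hmaps : MapsTo (fun z : E => (r : ℂ) • z) (closedBall 0 1) (ball 0 1) := fun z hz => by
      rw [mem_closedBall_zero_iff] at hz
      rw [mem_ball_zero_iff, norm_smul, Complex.norm_of_nonneg hr.le]
      exact (mul_le_of_le_one_right hr.le hz).trans_lt hr'
    have hcont : ContinuousOn (logJacobianForm fun z => F ((r : ℂ) • z)) (closedBall 0 1) := by
      refine ContinuousOn.congr (f := fun z => (r : ℂ) • logJacobianForm F ((r : ℂ) • z))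
        (fun z hz => ?_) fun z hz => hF.logJacobianForm_comp_smul isOpen_ball hr.ne' (hmaps hz)
      exact (((hF.differentiableAt_logJacobianForm isOpen_ball (hmaps hz)).continuousAt.comp
        (continuous_const_smul (r : ℂ)).continuousAt).const_smul (r : ℂ)).continuousWithinAt
    have hle := (hF.comp_smul hr.ne'
      (pow_le_one₀ hr.le hr'.le)).norm_logJacobianForm_zero_le_of_continuousOn hE hβ hcont
    rwa [hF.logJacobianForm_comp_smul isOpen_ball hr.ne' (by simp), smul_zero, norm_smul,
      Complex.norm_of_nonneg hr.le] at hle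
  have hlim : Tendsto (fun r : ℝ => r * ‖logJacobianForm F 0‖) (𝓝[<] 1)
      (𝓝 (1 * ‖logJacobianForm F 0‖)) :=
    (tendsto_id.mono_left nhdsWithin_le_nhds).mul_const _
  rw [one_mul] at hlim
  exact le_of_tendsto hlim (mem_of_superset (Ioo_mem_nhdsLT one_pos) hdilate)

theorem norm_preSchwarzian_zero_apply_self_le (hE : 1 < finrank ℂ E) (hF : HasSchwarzianBound F β)
    (hβ : 0 ≤ β) (v : E) :
    ‖preSchwarzian F 0 v v‖ ≤ (β + 2 * orderBound (finrank ℂ E) β) * ‖v‖ ^ 2 := by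
  rw [preSchwarzian_apply_self]
  calc ‖schwarzian F 0 v v + (2 * logJacobianForm F 0 v) • v‖
      ≤ ‖schwarzian F 0 v v‖ + 2 * ‖logJacobianForm F 0 v‖ * ‖v‖ := by
        refine (norm_add_le _ _).trans_eq ?_
        rw [norm_smul, norm_mul, Complex.norm_ofNat]
    _ ≤ β * ‖v‖ ^ 2 + 2 * (orderBound (finrank ℂ E) β * ‖v‖) * ‖v‖ := by
        gcongr
        · exact hF.norm_schwarzian_zero_apply_self_le hβ v
        · exact (logJacobianForm F 0).le_of_opNorm_le (hF.norm_logJacobianForm_zero_le hE hβ) v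
    _ = (β + 2 * orderBound (finrank ℂ E) β) * ‖v‖ ^ 2 := by ring

end HasSchwarzianBound

end MaximumPrinciple

section JacobiFormula

open Module Filter Topology Polynomial

variable {𝕜 E : Type*} [NontriviallyNormedField 𝕜] [CompleteSpace 𝕜] [NormedAddCommGroup E]
  [NormedSpace 𝕜 E] [FiniteDimensional 𝕜 E]

theorem differentiable_det_continuousLinearMap :
    Differentiable 𝕜 (ContinuousLinearMap.det : (E →L[𝕜] E) → 𝕜) := by
  let b := Module.finBasis 𝕜 E
  let toMatrixCLM : (E →L[𝕜] E) →L[𝕜] (Fin _ → Fin _ → 𝕜) :=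
    ((LinearMap.toMatrix b b).toLinearMap ∘ₗ ContinuousLinearMap.coeLM 𝕜).toContinuousLinearMap
  have hdet (A : E →L[𝕜] E) : A.det = Matrix.det (Matrix.of (toMatrixCLM A)) :=
    (LinearMap.det_toMatrix b (A : E →ₗ[𝕜] E)).symm
  simp only [funext hdet, Matrix.det_apply, Matrix.of_apply]
  fun_prop

theorem hasDerivAt_det_id_add_smul (L : E →L[𝕜] E) :
    HasDerivAt (fun t : 𝕜 => (.id 𝕜 E + t • L : E →L[𝕜] E).det) (traceCLM 𝕜 E L) 0 := by
  let b := Module.finBasis 𝕜 E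
  let M := LinearMap.toMatrix b b (L : E →ₗ[𝕜] E)
  have hdet (t : 𝕜) : (.id 𝕜 E + t • L : E →L[𝕜] E).det =
      (Matrix.det (1 + (X : 𝕜[X]) • M.map C)).eval t := by
    rw [ContinuousLinearMap.det, ← LinearMap.det_toMatrix b]
    simp [_root_.eval_det, M, ← Matrix.smul_eq_mul_diagonal]
  rw [funext hdet, traceCLM_apply, LinearMap.trace_eq_matrix_trace 𝕜 b,
    ← Matrix.derivative_det_one_add_X_smul]
  exact Polynomial.hasDerivAt _ 0

theorem fderiv_det_continuousLinearMap_comp (A X : E →L[𝕜] E) :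
    fderiv 𝕜 ContinuousLinearMap.det A (A ∘L X) = A.det * traceCLM 𝕜 E X := by
  have hline : HasDerivAt (fun t : 𝕜 => A + t • A ∘L X) (A ∘L X) 0 := by
    simpa using ((hasDerivAt_id (0 : 𝕜)).smul_const (A ∘L X)).const_add A
  have hchain : HasDerivAt (fun t : 𝕜 => (A + t • A ∘L X).det)
      (fderiv 𝕜 ContinuousLinearMap.det A (A ∘L X)) 0 :=
    HasFDerivAt.comp_hasDerivAt_of_eq (f := fun t : 𝕜 => A + t • A ∘L X) 0
      (differentiable_det_continuousLinearMap A).hasFDerivAt hline (by simp)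
  have hmul (t : 𝕜) : (A + t • A ∘L X).det = A.det * (.id 𝕜 E + t • X : E →L[𝕜] E).det := by
    simp only [ContinuousLinearMap.det]
    rw [← LinearMap.det_comp]
    congr 1
    ext x
    simp
  exact hchain.unique (by simpa only [hmul] using (hasDerivAt_det_id_add_smul X).const_mul A.det)

end JacobiFormula

section LogJacobian

variable {E : Type*} [NormedAddCommGroup E] [NormedSpace ℂ E] [FiniteDimensional ℂ E] {F : E → E}
  {z : E}

theorem fderiv_det_fderiv_apply (hF : ContDiffAt ℂ 2 F z) (hz : (fderiv ℂ F z).IsInvertible)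
    (v : E) : fderiv ℂ (fun w => (fderiv ℂ F w).det) z v =
      (fderiv ℂ F z).det * ((Module.finrank ℂ E + 1) * logJacobianForm F z v) := by
  have hDF : DifferentiableAt ℂ (fderiv ℂ F) z :=
    (hF.fderiv_right (m := 1) le_rfl).differentiableAt one_ne_zero
  have hsnd : fderiv ℂ (fderiv ℂ F) z v = fderiv ℂ F z ∘L preSchwarzian F z v := by
    ext1 w
    exact (fderiv_preSchwarzian_apply hz v w).symm
  have hchain := fderiv_comp z (differentiable_det_continuousLinearMap _) hDF
  rw [Function.comp_def] at hchain
  rw [hchain, ContinuousLinearMap.comp_apply, hsnd, fderiv_det_continuousLinearMap_comp,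
    traceCLM_apply_eq_mul_traceForm]
  rfl

end LogJacobian

section Coordinates

open Filter Topology

variable {n : ℕ} {F : (Fin n → ℂ) → (Fin n → ℂ)} {z : Fin n → ℂ} {α : ℝ}

local notation "toPi" => EuclideanSpace.equiv (Fin n) ℂ

theorem euclNorm_equiv (x : EuclideanSpace ℂ (Fin n)) : euclNorm n (toPi x) = ‖x‖ :=
  (EuclideanSpace.norm_eq x).symm

theorem equiv_mem_eball {x : EuclideanSpace ℂ (Fin n)} :
    toPi x ∈ eball n ↔ x ∈ Metric.ball 0 1 := by
  rw [mem_ball_zero_iff, ← euclNorm_equiv]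
  rfl

theorem isOpen_eball (n : ℕ) : IsOpen (eball n) := by
  unfold eball euclNorm
  exact isOpen_lt (by fun_prop) continuous_const

theorem zero_mem_eball (n : ℕ) : (0 : Fin n → ℂ) ∈ eball n := by
  simp [eball, euclNorm]

theorem bergSq_equiv (x v : EuclideanSpace ℂ (Fin n)) :
    bergSq n (toPi x) (toPi v) = (n + 1) * bergmanNormSq x v := by
  have hvv : ∑ i, v i * (starRingEnd ℂ) (v i) = (‖v‖ : ℂ) ^ 2 := by
    exact (PiLp.inner_apply v v).symm.trans (inner_self_eq_norm_sq_to_K v)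
  have hxv : (∑ i, v i * (starRingEnd ℂ) (x i)) * ∑ j, x j * (starRingEnd ℂ) (v j) =
      (‖inner ℂ x v‖ : ℂ) ^ 2 := by
    rw [← Complex.conj_mul', inner_conj_symm, mul_comm, PiLp.inner_apply, PiLp.inner_apply]
    rfl
  have hsum (P c : ℂ) : ∑ i, ∑ j, c / P ^ 2 *
      ((if i = j then P else 0) + (starRingEnd ℂ) (x i) * x j) * v i * (starRingEnd ℂ) (v j) =
        c * (‖v‖ ^ 2 / P + ‖inner ℂ x v‖ ^ 2 / P ^ 2) := by
    have hterm (i j : Fin n) : c / P ^ 2 *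
        ((if i = j then P else 0) + (starRingEnd ℂ) (x i) * x j) * v i * (starRingEnd ℂ) (v j) =
          c * ((if i = j then v i * (starRingEnd ℂ) (v j) / P else 0)
            + v i * (starRingEnd ℂ) (x i) * (x j * (starRingEnd ℂ) (v j)) / P ^ 2) := by
      obtain rfl | hP := eq_or_ne P 0
      · simp
      · split_ifs <;> field_simp
        ring
    simp only [hterm, ← Finset.mul_sum, Finset.sum_add_distrib, Finset.sum_ite_eq,
      Finset.mem_univ, if_true, ← Finset.sum_div, hvv]
    rw [← Finset.sum_mul, hxv]
  refine (congrArg Complex.re (hsum _ _)).trans ?_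
  rw [euclNorm_equiv, bergmanNormSq]
  norm_cast

theorem sum_sum_mul_apply_single (B : (Fin n → ℂ) →L[ℂ] (Fin n → ℂ) →L[ℂ] (Fin n → ℂ))
    (v w : Fin n → ℂ) (k : Fin n) :
    ∑ i, ∑ j, v i * (w j * B (Pi.single i 1) (Pi.single j 1) k) = B v w k := by
  conv_rhs => rw [pi_eq_sum_univ' v]
  simp only [map_sum, map_smul, sum_apply, smul_apply, Finset.sum_apply, Pi.smul_apply, smul_eq_mul,
    ← Finset.mul_sum]
  conv_rhs => rw [pi_eq_sum_univ' w]
  simp only [map_sum, map_smul, Finset.sum_apply, Pi.smul_apply, smul_eq_mul]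

theorem pd_apply (hF : DifferentiableAt ℂ F z) (i j : Fin n) :
    pd n j (fun w => F w i) z = fderiv ℂ F z (Pi.single j 1) i := by
  rw [pd, (hasFDerivAt_pi'.1 hF.hasFDerivAt i).fderiv]
  rfl

theorem Jac_eq_toMatrix' (hF : DifferentiableAt ℂ F z) :
    Jac n F z = LinearMap.toMatrix' (fderiv ℂ F z : (Fin n → ℂ) →ₗ[ℂ] Fin n → ℂ) := by
  ext i j
  rw [LinearMap.toMatrix'_apply]
  exact pd_apply hF i j

theorem JDet_eq_det (hF : DifferentiableAt ℂ F z) : JDet n F z = (fderiv ℂ F z).det := by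
  rw [JDet, Jac_eq_toMatrix' hF, LinearMap.det_toMatrix', ContinuousLinearMap.det]

theorem isInvertible_fderiv_of_JDet_ne_zero (hF : DifferentiableAt ℂ F z) (hz : JDet n F z ≠ 0) :
    (fderiv ℂ F z).IsInvertible := by
  rw [JDet_eq_det hF] at hz
  exact ⟨(fderiv ℂ F z).toContinuousLinearEquivOfDetNeZero hz, rfl⟩

theorem Jac_inv_mulVec (hF : DifferentiableAt ℂ F z) (hz : JDet n F z ≠ 0) (v : Fin n → ℂ) :
    (Jac n F z)⁻¹.mulVec v = (fderiv ℂ F z).inverse v := by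
  have hJac : (Jac n F z).mulVec ((fderiv ℂ F z).inverse v) = v := by
    rw [Jac_eq_toMatrix' hF, LinearMap.toMatrix'_mulVec]
    exact (isInvertible_fderiv_of_JDet_ne_zero hF hz).self_apply_inverse v
  conv_lhs => rw [← hJac]
  rw [Matrix.mulVec_mulVec, Matrix.nonsing_inv_mul _ (isUnit_iff_ne_zero.2 hz), Matrix.one_mulVec]

theorem pd2_apply (hF : ContDiffAt ℂ 2 F z) (i j k : Fin n) :
    pd2 n i j (fun w => F w k) z =
      fderiv ℂ (fderiv ℂ F) z (Pi.single i 1) (Pi.single j 1) k := by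
  have hfst : (fun w => pd n j (fun w => F w k) w) =ᶠ[𝓝 z]
      fun w => fderiv ℂ F w (Pi.single j 1) k := by
    filter_upwards [hF.eventually (by simp)] with w hw
    exact pd_apply (hw.differentiableAt (by simp)) k j
  have hsnd := ((hF.fderiv_right (m := 1) le_rfl).differentiableAt one_ne_zero).hasFDerivAt
  have hcoord := hasFDerivAt_pi'.1 (hsnd.clm_apply (hasFDerivAt_const (Pi.single j (1 : ℂ)) z)) k
  rw [pd2, pd, hfst.fderiv_eq, hcoord.fderiv]
  simp

theorem pd_JDet (hF : ContDiffAt ℂ 2 F z) (hz : JDet n F z ≠ 0) (j : Fin n) :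
    pd n j (JDet n F) z = JDet n F z * ((n + 1) * logJacobianForm F z (Pi.single j 1)) := by
  have hdet : JDet n F =ᶠ[𝓝 z] fun w => (fderiv ℂ F w).det := by
    filter_upwards [hF.eventually (by simp)] with w hw
    exact JDet_eq_det (hw.differentiableAt (by simp))
  rw [pd, hdet.fderiv_eq, fderiv_det_fderiv_apply hF
    (isInvertible_fderiv_of_JDet_ne_zero (hF.differentiableAt (by simp)) hz), hdet.eq_of_nhds,
    Module.finrank_fin_fun]

theorem oSchw_eq_schwarzian (hF : ContDiffAt ℂ 2 F z) (hz : JDet n F z ≠ 0) (i j k : Fin n) :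
    oSchw n F i j k z = schwarzian F z (Pi.single i 1) (Pi.single j 1) k := by
  have hn : (n + 1 : ℂ) ≠ 0 := by exact_mod_cast n.succ_ne_zero
  have hpre : ∑ l, pd2 n i j (fun w => F w l) z * (Jac n F z)⁻¹ k l =
      preSchwarzian F z (Pi.single i 1) (Pi.single j 1) k := by
    rw [preSchwarzian_apply, ← Jac_inv_mulVec (hF.differentiableAt (by simp)) hz]
    simp only [pd2_apply hF, mul_comm, Matrix.mulVec, dotProduct]
  rw [oSchw, hpre, pd_JDet hF hz, pd_JDet hF hz, mul_div_cancel_left₀ _ hz,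
    mul_div_cancel_left₀ _ hz]
  change _ = preSchwarzian F z _ _ k - (logJacobianForm F z _ * _ + logJacobianForm F z _ * _)
  simp only [Pi.single_apply]
  field_simp
  ring

theorem SchwOp_eq_schwarzian (hF : ContDiffAt ℂ 2 F z) (hz : JDet n F z ≠ 0) (v : Fin n → ℂ) :
    SchwOp n F z v = schwarzian F z v v := by
  ext k
  rw [← sum_sum_mul_apply_single]
  refine Finset.sum_congr rfl fun i _ => Finset.sum_congr rfl fun j _ => ?_
  rw [oSchw_eq_schwarzian hF hz, mul_assoc, mul_comm _ (v j)]

theorem sum_sum_pd2_eq_preSchwarzian (hF : ContDiffAt ℂ 2 F z) (hz : Jac n F z = 1)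
    (v : Fin n → ℂ) :
    (fun k => ∑ i, ∑ j, pd2 n i j (fun w => F w k) z * v i * v j) = preSchwarzian F z v v := by
  have hinv := Jac_inv_mulVec (hF.differentiableAt (by simp)) (by simp [JDet, hz])
    (fderiv ℂ (fderiv ℂ F) z v v)
  rw [hz, inv_one, Matrix.one_mulVec] at hinv
  rw [preSchwarzian_apply, ← hinv]
  ext k
  rw [← sum_sum_mul_apply_single]
  refine Finset.sum_congr rfl fun i _ => Finset.sum_congr rfl fun j _ => ?_
  rw [pd2_apply hF]
  ring

end Coordinates

section NormOrder

variable {n : ℕ} {F : (Fin n → ℂ) → (Fin n → ℂ)} {α : ℝ}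

theorem memF.isLocallyBiholomorphicOn (hF : memF n α F) :
    IsLocallyBiholomorphicOn F (eball n) where
  differentiableOn := hF.1
  isInvertible_fderiv z hz := isInvertible_fderiv_of_JDet_ne_zero
    (hF.1.differentiableAt ((isOpen_eball n).mem_nhds hz)) (hF.2.1 z hz)

theorem bergmanNormSq_apply_self_le_of_unit {E : Type*} [NormedAddCommGroup E]
    [InnerProductSpace ℂ E] {z : E} {B : E →L[ℂ] E →L[ℂ] E} {c : ℝ} (hz : z ∈ Metric.ball (0 : E) 1)
    (hc : 0 < c)
    (hB : ∀ v, c * bergmanNormSq z v = 1 → c * bergmanNormSq z (B v v) ≤ α ^ 2) (v : E) :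
    bergmanNormSq z (B v v) ≤ (√c * α) ^ 2 * bergmanNormSq z v ^ 2 := by
  obtain rfl | hv := eq_or_ne v 0
  · simp [bergmanNormSq]
  have hpos : 0 < c * bergmanNormSq z v := mul_pos hc
    ((bergmanNormSq_nonneg hz v).lt_of_ne' ((bergmanNormSq_eq_zero hz).not.2 hv))
  obtain ⟨t, ht⟩ : ∃ t : ℝ, t ^ 2 = (c * bergmanNormSq z v)⁻¹ :=
    ⟨√(c * bergmanNormSq z v)⁻¹, Real.sq_sqrt (inv_nonneg.2 hpos.le)⟩
  have hnorm : ‖(t : ℂ)‖ ^ 2 = (c * bergmanNormSq z v)⁻¹ := by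
    rw [Complex.norm_real, Real.norm_eq_abs, sq_abs, ht]
  have hle := hB ((t : ℂ) • v) (by
    rw [bergmanNormSq_smul, hnorm, mul_left_comm, inv_mul_cancel₀ hpos.ne'])
  simp only [map_smul, smul_apply, bergmanNormSq_smul, hnorm] at hle
  rw [mul_left_comm c, mul_left_comm c, ← mul_assoc, ← sq, inv_pow, ← div_eq_inv_mul,
    div_le_iff₀ (pow_pos hpos 2)] at hle
  rw [mul_pow, Real.sq_sqrt hc.le]
  refine le_of_mul_le_mul_left (hle.trans_eq ?_) hc
  ring

theorem memF.hasSchwarzianBound (hF : memF n α F) (hα : 0 ≤ α) :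
    HasSchwarzianBound (F ∘ EuclideanSpace.equiv (Fin n) ℂ) (√(n + 1) * α) := by
  set T := EuclideanSpace.equiv (Fin n) ℂ
  have hlb := hF.isLocallyBiholomorphicOn
  refine ⟨(hlb.comp_continuousLinearEquiv T (isOpen_eball n)).mono fun x => equiv_mem_eball.2,
    fun x hx => bergmanNormSq_apply_self_le_of_unit hx n.cast_add_one_pos fun v hv => ?_⟩
  have hTx : T x ∈ eball n := equiv_mem_eball.2 hx
  rw [← bergSq_equiv] at hv ⊢
  rw [hlb.schwarzian_comp_continuousLinearEquiv T (isOpen_eball n) hTx,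
    ← SchwOp_eq_schwarzian (hlb.contDiffAt (isOpen_eball n) hTx 2) (hF.2.1 _ hTx)]
  exact (Real.sqrt_le_left hα).1 (hF.2.2.2.2 _ hTx _ hv)

theorem memF.norm_preSchwarzian_zero_apply_self_le (hn : 1 < n) (hF : memF n α F) (hα : 0 ≤ α)
    (v : Fin n → ℂ) : euclNorm n (preSchwarzian F 0 v v) ≤
      (√(n + 1) * α + 2 * orderBound n (√(n + 1) * α)) * euclNorm n v ^ 2 := by
  obtain ⟨x, rfl⟩ := (EuclideanSpace.equiv (Fin n) ℂ).surjective v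
  have h := (hF.hasSchwarzianBound hα).norm_preSchwarzian_zero_apply_self_le (by simpa)
    (by positivity) x
  rwa [finrank_euclideanSpace_fin, ← euclNorm_equiv, ← euclNorm_equiv,
    hF.isLocallyBiholomorphicOn.preSchwarzian_comp_continuousLinearEquiv _ (isOpen_eball n)
      (equiv_mem_eball.2 (Metric.mem_ball_self one_pos)), map_zero] at h

theorem half_add_orderBound_le (hn : 1 < n) (hα : 0 ≤ α) :
    √(n + 1) * α / 2 + orderBound n (√(n + 1) * α) ≤
      (n + 1) * α + √(1 + 1 / 4 * (n + 1) * α ^ 2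
        + ((4 * n ^ 2 + 2 * n - 2 + (n + 1) / (n - 1)) * α ^ 2
          + (4 * √(n + 1) + 8 * √(n + 1) / (n - 1)) * α)) := by
  have hn' : (1 : ℝ) < n := by exact_mod_cast hn
  have hsq : √(n + 1 : ℝ) ^ 2 = n + 1 := Real.sq_sqrt (by positivity)
  have hsqrt : √(n + 1 : ℝ) ≤ n + 1 := Real.sqrt_le_iff.2 ⟨by positivity, by nlinarith⟩
  have hβ : √(n + 1 : ℝ) * α ≤ (n + 1) * α := by gcongr
  have hsqrtα : 0 ≤ √(n + 1 : ℝ) * α := by positivity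
  have hC : (4 * n * (√(n + 1) * α) + n * (√(n + 1) * α) ^ 2) / (n - 1 : ℝ) ≤
      (4 * n ^ 2 + 2 * n - 2 + (n + 1) / (n - 1)) * α ^ 2
        + (4 * √(n + 1) + 8 * √(n + 1) / (n - 1)) * α := by
    have hn'' : (n - 1 : ℝ) ≠ 0 := (sub_pos.2 hn').ne'
    have hα2 : 0 ≤ (n ^ 2 - 1) * (4 * n - 3) * α ^ 2 := by
      have : (1 : ℝ) ≤ n ^ 2 := one_le_pow₀ hn'.le
      exact mul_nonneg (mul_nonneg (by linarith) (by linarith)) (sq_nonneg α)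
    rw [div_le_iff₀ (sub_pos.2 hn'), mul_pow, hsq]
    field_simp
    linarith
  have hquarter : (√(n + 1 : ℝ) * α) ^ 2 / 4 = 1 / 4 * (n + 1) * α ^ 2 := by
    rw [mul_pow, hsq]
    ring
  rw [orderBound, ← add_assoc, add_halves, hquarter]
  gcongr

end NormOrder

/-- Corollary 3.5: the norm order of `F_α` satisfies
`‖ord‖F_α ≤ (n+1)α + √(1 + (1/4)(n+1)α² + C(n,α))`; equivalently, every `F ∈ F_α`
and every unit vector `z` satisfy the corresponding bound on `(1/2)|D²F(0)(z,z)|`. -/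
theorem stmt_15 (n : ℕ) (hn : 2 ≤ n) (α : ℝ) (hα : 0 ≤ α)
    (F : (Fin n → ℂ) → (Fin n → ℂ)) (hF : memF n α F)
    (z : Fin n → ℂ) (hz : euclNorm n z = 1) :
    (1 / 2) * euclNorm n (fun j => ∑ i, ∑ k, pd2 n i k (fun w => F w j) 0 * z i * z k) ≤
      ((n : ℝ) + 1) * α
        + Real.sqrt (1 + (1 / 4) * ((n : ℝ) + 1) * α ^ 2 +
          ((4 * (n : ℝ) ^ 2 + 2 * (n : ℝ) - 2 + ((n : ℝ) + 1) / ((n : ℝ) - 1)) * α ^ 2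
            + (4 * Real.sqrt ((n : ℝ) + 1)
              + 8 * Real.sqrt ((n : ℝ) + 1) / ((n : ℝ) - 1)) * α)) := by
  have hsum := sum_sum_pd2_eq_preSchwarzian
    (hF.isLocallyBiholomorphicOn.contDiffAt (isOpen_eball n) (zero_mem_eball n) 2) hF.2.2.2.1 z
  have hnorm := hF.norm_preSchwarzian_zero_apply_self_le hn hα z
  rw [hz, one_pow, mul_one, ← hsum] at hnorm
  linarith [half_add_orderBound_le hn hα]

end
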